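/- Let Γ be a (d−1)-dimensional simplicial complex on [n] satisfying the Link condition with respect to {i,j}, where 1 ≤ i < j ≤ n, and suppose dim C_Γ(ij) = d−1 and dim lk_Γ({i,j}) = d−3. If both C_Γ(ij) and lk_Γ({i,j}) have the strong Lefschetz property (over an infinite field K of arbitrary characteristic), then Γ has the strong Lefschetz property. -/

import Mathlib

/-! Combinatorics of simplicial complexes on subsets of ℕ (vertex set `[n] = Finset.Icc 1 n`). -/

/-- `Γ` is a simplicial complex on the vertex set `V`. -/
def SimplicialComplexOn (V : Finset ℕ) (Γ : Set (Finset ℕ)) : Prop :=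
  (∀ F ∈ Γ, F ⊆ V) ∧ (∀ v ∈ V, ({v} : Finset ℕ) ∈ Γ) ∧
    (∀ F ∈ Γ, ∀ G, G ⊆ F → G ∈ Γ)

/-- The dimension of a simplicial complex, as an integer (`dim Γ = max {|F| - 1 : F ∈ Γ}`). -/
noncomputable def sdim (Γ : Set (Finset ℕ)) : ℤ :=
  sSup ((fun F : Finset ℕ => (F.card : ℤ) - 1) '' Γ)

/-- A facet of `Γ` is a maximal face. -/
def IsFacet (Γ : Set (Finset ℕ)) (F : Finset ℕ) : Prop :=
  F ∈ Γ ∧ ∀ G ∈ Γ, F ⊆ G → F = G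

/-- A complex is pure if all of its facets have the same cardinality. -/
def PureComplex (Γ : Set (Finset ℕ)) : Prop :=
  ∀ F G, IsFacet Γ F → IsFacet Γ G → F.card = G.card

/-- `fvec Γ k` is the number of faces of `Γ` of cardinality `k`, i.e. `f_{k-1}(Γ)`. -/
noncomputable def fvec (Γ : Set (Finset ℕ)) (k : ℕ) : ℕ :=
  {F ∈ Γ | F.card = k}.ncard

/-- The `h`-vector of a `(d-1)`-dimensional complex:
`h_i = ∑_{j=0}^i (-1)^{i-j} binom(d-j, d-i) f_{j-1}`. -/
noncomputable def hvec (d : ℕ) (Γ : Set (Finset ℕ)) (i : ℕ) : ℤ :=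
  ∑ j ∈ Finset.range (i + 1),
    (-1 : ℤ) ^ (i - j) * (Nat.choose (d - j) (d - i) : ℤ) * (fvec Γ j : ℤ)

/-- The link of `Γ` with respect to a face `F`. -/
def linkOf (Γ : Set (Finset ℕ)) (F : Finset ℕ) : Set (Finset ℕ) :=
  {G | Disjoint G F ∧ G ∪ F ∈ Γ}

/-- The contraction of `Γ` with respect to `{i,j}`, identifying vertex `i` with `j`. -/
def contraction (Γ : Set (Finset ℕ)) (i j : ℕ) : Set (Finset ℕ) :=
  {F | F ∈ Γ ∧ i ∉ F} ∪ {G | ∃ F ∈ Γ, i ∈ F ∧ G = F.erase i ∪ {j}}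

/-- The Link condition: `lk_Γ({i}) ∩ lk_Γ({j}) = lk_Γ({i,j})`. -/
def LinkCondition (Γ : Set (Finset ℕ)) (i j : ℕ) : Prop :=
  linkOf Γ {i} ∩ linkOf Γ {j} = linkOf Γ {i, j}

open Classical in
/-- The shift operator `C_{ij}` on faces. -/
noncomputable def shiftMap (Γ : Set (Finset ℕ)) (i j : ℕ) (F : Finset ℕ) : Finset ℕ :=
  if i ∈ F ∧ j ∉ F ∧ F.erase i ∪ {j} ∉ Γ then F.erase i ∪ {j} else F

/-- `Shift_{ij}(Γ) = {C_{ij}(F) : F ∈ Γ}`. -/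
noncomputable def shiftComplex (Γ : Set (Finset ℕ)) (i j : ℕ) : Set (Finset ℕ) :=
  (shiftMap Γ i j) '' Γ

/-- The join `W * Σ = {F ∪ G : F ⊆ W, G ∈ Σ}` of a vertex set with a complex. -/
def joinW (W : Finset ℕ) (C : Set (Finset ℕ)) : Set (Finset ℕ) :=
  {H | ∃ F ⊆ W, ∃ G ∈ C, H = F ∪ G}

/-- Strong edge decomposability: boundaries of simplices and `{∅}` are strongly edge
decomposable, and recursively, a pure complex satisfying the Link condition w.r.t. an edge
`{i,j}` whose contraction and link are strongly edge decomposable is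
strongly edge decomposable. -/
inductive StronglyEdgeDecomposable : Set (Finset ℕ) → Prop
  | trivialComplex : StronglyEdgeDecomposable {(∅ : Finset ℕ)}
  | simplexBoundary (V : Finset ℕ) (hV : V.Nonempty) :
      StronglyEdgeDecomposable {F | F ⊆ V ∧ F ≠ V}
  | contract (Γ : Set (Finset ℕ)) (i j : ℕ) (hij : i < j)
      (hpure : PureComplex Γ) (hedge : ({i, j} : Finset ℕ) ∈ Γ)
      (hlc : LinkCondition Γ i j)
      (hcon : StronglyEdgeDecomposable (contraction Γ i j))
      (hlk : StronglyEdgeDecomposable (linkOf Γ {i, j})) :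
      StronglyEdgeDecomposable Γ

/-- A shifted complex: `F ∈ Γ`, `i ∈ F`, `i < j`, `j ∈ V` imply `(F \ {i}) ∪ {j} ∈ Γ`. -/
def ShiftedComplex (V : Finset ℕ) (Γ : Set (Finset ℕ)) : Prop :=
  ∀ F ∈ Γ, ∀ i ∈ F, ∀ j, i < j → j ∈ V → insert j (F.erase i) ∈ Γ

/-- A `d`-subset `F ⊆ [n]` is admissible if `n - k ∉ F` implies `[n-d+k, n-k-1] ⊆ F`. -/
def Admissible (n d : ℕ) (F : Finset ℕ) : Prop :=
  F ⊆ Finset.Icc 1 n ∧ F.card = d ∧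
    ∀ k < n, (n - k) ∉ F → Finset.Icc (n - d + k) (n - k - 1) ⊆ F

/-- `Δ(n,d)`, the complex generated by all admissible `d`-subsets of `[n]`; by a theorem of
Kalai this is the symmetric algebraic shifted complex `Δˢ(C(n,d))` of the boundary complex of
the cyclic `d`-polytope with `n` vertices. -/
def DeltaC (n d : ℕ) : Set (Finset ℕ) :=
  if d = 0 then {(∅ : Finset ℕ)} else {G | ∃ F, Admissible n d F ∧ G ⊆ F}

/-- The increasing enumeration of `V`, as a map `{1, …, |V|} → V ⊆ ℕ` (identity elsewhere). -/
noncomputable def vlabel (V : Finset ℕ) (i : ℕ) : ℕ :=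
  if h : i - 1 < V.card then (((V.orderIsoOfFin rfl) ⟨i - 1, h⟩ : V) : ℕ) else i

/-- `Δ(V,d)`: the complex `Δ(|V|,d)` relabeled order-isomorphically onto the vertex set `V`. -/
noncomputable def DeltaV (V : Finset ℕ) (d : ℕ) : Set (Finset ℕ) :=
  (fun G : Finset ℕ => G.image (vlabel V)) '' DeltaC V.card d
/-! Squeezed balls and spheres (Kalai). Monomials on `[m]` are represented as multisets. -/

/-- `U` is a shifted order ideal of monomials on `[m]`: it contains `1` and all variables
`x_1,…,x_m`, is closed under divisibility, and `u·x_i ∈ U`, `i < j ≤ m` imply `u·x_j ∈ U`.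
(A monomial is encoded as the multiset of its variable indices.) -/
def IsShiftedOrderIdeal (m : ℕ) (U : Set (Multiset ℕ)) : Prop :=
  (∀ u ∈ U, ∀ i ∈ u, i ∈ Finset.Icc 1 m) ∧ (0 : Multiset ℕ) ∈ U ∧
    (∀ i ∈ Finset.Icc 1 m, ({i} : Multiset ℕ) ∈ U) ∧
    (∀ u ∈ U, ∀ v, v ≤ u → v ∈ U) ∧
    (∀ u : Multiset ℕ, ∀ i j : ℕ, i < j → j ≤ m → (i ::ₘ u) ∈ U → (j ::ₘ u) ∈ U)

/-- For a monomial `u = x_{i_1}⋯x_{i_k}` (`i_1 ≤ … ≤ i_k`), the `(d+1)`-set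
`F_d(u) = {i_1, i_1+1} ∪ {i_2+2, i_2+3} ∪ ⋯ ∪ {i_k+2(k-1), i_k+2k-1} ∪ [n+2k-d, n]`. -/
noncomputable def Fd (n d : ℕ) (u : Multiset ℕ) : Finset ℕ :=
  (Finset.range (Multiset.card u)).biUnion
      (fun j => {(u.sort (· ≤ ·)).getD j 0 + 2 * j, (u.sort (· ≤ ·)).getD j 0 + 2 * j + 1}) ∪
    Finset.Icc (n + 2 * Multiset.card u - d) n

/-- The squeezed `d`-ball `B_d(U)`: the complex generated by `{F_d(u) : u ∈ U}`. -/
def squeezedBall (n d : ℕ) (U : Set (Multiset ℕ)) : Set (Finset ℕ) :=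
  {G | ∃ u ∈ U, G ⊆ Fd n d u}

/-- The boundary of a pure `d`-dimensional complex `B`: the subcomplex generated by the
`(d-1)`-dimensional faces (cardinality-`d` faces) contained in exactly one facet. -/
noncomputable def complexBoundary (d : ℕ) (B : Set (Finset ℕ)) : Set (Finset ℕ) :=
  {F | ∃ G, F ⊆ G ∧ G ∈ B ∧ G.card = d ∧
    {H | H ∈ B ∧ H.card = d + 1 ∧ G ⊆ H}.ncard = 1}

/-- The squeezed `(d-1)`-sphere `S_d(U) = ∂ B_d(U)`. -/
noncomputable def squeezedSphere (n d : ℕ) (U : Set (Multiset ℕ)) : Set (Finset ℕ) :=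
  complexBoundary d (squeezedBall n d U)

/-! The Stanley–Reisner ideal, the degree reverse lexicographic order, initial ideals and
generic initial ideals in the polynomial ring `K[x_1,…,x_n]`, realized as
`MvPolynomial (Fin n) K` with the variable `x_i` being `X ⟨i-1⟩`. -/

/-- The squarefree monomial `x_F = ∏_{i ∈ F} x_i` (variable `x_i`, `1 ≤ i ≤ n`, is `X ⟨i-1⟩`). -/
noncomputable def faceMonomial (K : Type*) [CommRing K] (n : ℕ) (F : Finset ℕ) :
    MvPolynomial (Fin n) K :=
  ∏ a ∈ Finset.univ.filter (fun a : Fin n => (a : ℕ) + 1 ∈ F), MvPolynomial.X a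

/-- The Stanley–Reisner ideal of a complex `Γ` on `[n]`, generated by the squarefree
monomials `x_F` with `F ⊆ [n]`, `F ∉ Γ`. -/
noncomputable def srIdeal (K : Type*) [CommRing K] (n : ℕ) (Γ : Set (Finset ℕ)) :
    Ideal (MvPolynomial (Fin n) K) :=
  Ideal.span {f | ∃ F : Finset ℕ, F ⊆ Finset.Icc 1 n ∧ F ∉ Γ ∧ f = faceMonomial K n F}

/-- The degree reverse lexicographic order (induced by `x_1 > x_2 > ⋯`, smaller index =
bigger variable): `u < v` iff `deg u < deg v`, or degrees agree and at the largest index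
where `u, v` differ, `u` has the larger exponent. -/
def DegRevLexLT {σ : Type*} [LinearOrder σ] (u v : σ →₀ ℕ) : Prop :=
  (u.sum fun _ e => e) < (v.sum fun _ e => e) ∨
    ((u.sum fun _ e => e) = (v.sum fun _ e => e) ∧
      ∃ k, v k < u k ∧ ∀ l, k < l → u l = v l)

/-- The initial ideal of `I` w.r.t. the degree reverse lexicographic order: the ideal
spanned by the leading monomials of the elements of `I`. -/
noncomputable def initialIdeal {σ : Type*} [LinearOrder σ] {K : Type*} [Field K]
    (I : Ideal (MvPolynomial σ K)) : Ideal (MvPolynomial σ K) :=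
  Ideal.span {m | ∃ f ∈ I, ∃ u ∈ f.support, m = MvPolynomial.monomial u (1 : K) ∧
    ∀ v ∈ f.support, v ≠ u → DegRevLexLT v u}

/-- The linear change of coordinates of `K[x_1,…,x_n]` associated with a matrix `M`,
`x_j ↦ ∑_i M_{ij} x_i`. -/
noncomputable def genLin {K : Type*} [CommRing K] {n : ℕ} (M : Matrix (Fin n) (Fin n) K) :
    MvPolynomial (Fin n) K →ₐ[K] MvPolynomial (Fin n) K :=
  MvPolynomial.aeval (fun j => ∑ a : Fin n, MvPolynomial.C (M a j) * MvPolynomial.X a)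

/-- `J` is the generic initial ideal (w.r.t. degrevlex) of `I`: there is a nonempty Zariski
open subset `U ⊆ GL_n(K)` (the nonvanishing locus of a nonzero polynomial in the matrix
entries) such that `in(φ(I)) = J` for every `φ ∈ U`. -/
def IsGin {K : Type*} [Field K] {n : ℕ} (I J : Ideal (MvPolynomial (Fin n) K)) : Prop :=
  ∃ p : MvPolynomial (Fin n × Fin n) K, p ≠ 0 ∧
    ∀ M : Matrix (Fin n) (Fin n) K, IsUnit M.det →
      MvPolynomial.eval (fun q => M q.1 q.2) p ≠ 0 →
      initialIdeal (Ideal.map (genLin M) I) = J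

/-- The set `G(J)` of (exponent vectors of) minimal monomial generators of a monomial
ideal `J`. -/
def minimalMonomialGens {σ : Type*} {K : Type*} [Field K] (J : Ideal (MvPolynomial σ K)) :
    Set (σ →₀ ℕ) :=
  {u | MvPolynomial.monomial u (1 : K) ∈ J ∧
    ∀ v : σ →₀ ℕ, v ≤ u → MvPolynomial.monomial v (1 : K) ∈ J → v = u}

/-- The squarefree operation `Φ` on exponent vectors:
`x_{i_1} x_{i_2} ⋯ x_{i_k} ↦ {i_1, i_2+1, …, i_k+k-1}` (`i_1 ≤ i_2 ≤ ⋯ ≤ i_k`). -/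
noncomputable def sqfreeOp {n : ℕ} (u : Fin n →₀ ℕ) : Finset ℕ :=
  (List.zipWith (· + ·)
      ((u.toMultiset.map (fun a : Fin n => (a : ℕ) + 1)).sort (· ≤ ·))
      (List.range (Multiset.card (u.toMultiset)))).toFinset

/-- `Δs` is the symmetric algebraic shifted complex of `Γ`: its Stanley–Reisner ideal is
`Φ(Gin(I_Γ))`, i.e. `Δs` consists of the `F ⊆ [n]` containing no `Φ(u)`, `u ∈ G(Gin(I_Γ))`. -/
def IsSymmetricShift (K : Type*) [Field K] (n : ℕ) (Γ Δs : Set (Finset ℕ)) : Prop :=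
  ∃ J : Ideal (MvPolynomial (Fin n) K), IsGin (srIdeal K n Γ) J ∧
    Δs = {F | F ⊆ Finset.Icc 1 n ∧ ∀ u ∈ minimalMonomialGens J, ¬ sqfreeOp u ⊆ F}

/-- The exponent vector (in `K[x_1,…,x_n]`) of a monomial given as a multiset. -/
noncomputable def multisetToExp (n : ℕ) (u : Multiset ℕ) : Fin n →₀ ℕ :=
  Finsupp.equivFunOnFinite.symm (fun a : Fin n => u.count ((a : ℕ) + 1))
/-! The exterior algebra `E = ⋀⟨e_1, e_2, …⟩` over `K`, exterior face ideals, the reverse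
lexicographic order, initial ideals and exterior algebraic shifting. We realize `E` as the
exterior algebra of the `K`-module `ℕ → K`, with `e_i` the image of `Pi.single i 1`. -/

/-- The exterior algebra `⋀ (ℕ → K)` hosting all the exterior face ideals. -/
abbrev ExtAlg (K : Type*) [Field K] := ExteriorAlgebra K (ℕ → K)

/-- The exterior monomial `e_F = e_{i_1} ∧ ⋯ ∧ e_{i_k}` for `F = {i_1 < ⋯ < i_k}`. -/
noncomputable def eMon (K : Type*) [Field K] (F : Finset ℕ) : ExtAlg K :=
  ((F.sort (· ≤ ·)).map (fun i => ExteriorAlgebra.ι K (Pi.single i (1 : K)))).prod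

/-- The exterior face ideal `J_Γ` of a complex `Γ` on the vertex set `V`, generated by the
monomials `e_F` with `F ⊆ V`, `F ∉ Γ`. -/
noncomputable def extFaceIdeal (K : Type*) [Field K] (V : Finset ℕ) (Γ : Set (Finset ℕ)) :
    Ideal (ExtAlg K) :=
  Ideal.span {x | ∃ F : Finset ℕ, F ⊆ V ∧ F ∉ Γ ∧ x = eMon K F}

/-- The alternating form computing the determinant of the coordinates indexed by `F`. -/
noncomputable def detCoeffAlt (K : Type*) [Field K] (F : Finset ℕ) :
    (ℕ → K) [⋀^Fin F.card]→ₗ[K] K :=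
  (Matrix.detRowAlternating).compLinearMap
    (LinearMap.funLeft K K (fun b : Fin F.card => ((F.orderIsoOfFin rfl b : F) : ℕ)))

/-- The coefficient functional of the basis monomial `e_F`: the linear functional on the
exterior algebra giving the coefficient of `e_F` in the monomial basis expansion. -/
noncomputable def extCoeff (K : Type*) [Field K] (F : Finset ℕ) : ExtAlg K →ₗ[K] K :=
  ExteriorAlgebra.liftAlternating
    (fun i => if h : i = F.card then (detCoeffAlt K F).domDomCongr (finCongr h.symm) else 0)

/-- The reverse lexicographic order (induced by `1 > 2 > ⋯`) on exterior monomials: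
`F < G` iff `|F| < |G|`, or the cardinalities agree and the largest element of the
symmetric difference `F Δ G` belongs to `F`. -/
def RevLexLT (F G : Finset ℕ) : Prop :=
  F.card < G.card ∨ (F.card = G.card ∧
    ∃ k, k ∈ F ∧ k ∉ G ∧ ∀ l, k < l → (l ∈ F ↔ l ∈ G))

/-- The initial ideal of an ideal `I` of the exterior algebra w.r.t. the reverse
lexicographic order: spanned by the leading monomials `e_F` of the elements of `I`. -/
noncomputable def extInitialIdeal (K : Type*) [Field K] (I : Ideal (ExtAlg K)) :
    Ideal (ExtAlg K) :=
  Ideal.span {x | ∃ y ∈ I, ∃ F : Finset ℕ, x = eMon K F ∧ extCoeff K F y ≠ 0 ∧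
    ∀ G : Finset ℕ, extCoeff K G y ≠ 0 → G ≠ F → RevLexLT G F}

/-- The linear change of coordinates of `span{e_i : i ∈ V}` (identity elsewhere)
associated with a `|V| × |V|` matrix `M`. -/
noncomputable def extLinMap (K : Type*) [Field K] (V : Finset ℕ)
    (M : Matrix (Fin V.card) (Fin V.card) K) : (ℕ → K) →ₗ[K] (ℕ → K) where
  toFun v k :=
    if h : k ∈ V then
      ∑ a : Fin V.card,
        M ((V.orderIsoOfFin rfl).symm ⟨k, h⟩) a * v ((V.orderIsoOfFin rfl a : V) : ℕ)
    else v k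
  map_add' x y := by
    funext k
    by_cases h : k ∈ V <;> simp [h, mul_add, Finset.sum_add_distrib]
  map_smul' c x := by
    funext k
    by_cases h : k ∈ V <;> simp [h, Finset.mul_sum, mul_left_comm]

/-- The algebra automorphism of the exterior algebra induced by `extLinMap`. -/
noncomputable def extAlgMap (K : Type*) [Field K] (V : Finset ℕ)
    (M : Matrix (Fin V.card) (Fin V.card) K) : ExtAlg K →ₐ[K] ExtAlg K :=
  ExteriorAlgebra.lift K ⟨(ExteriorAlgebra.ι K).comp (extLinMap K V M),
    fun _ => ExteriorAlgebra.ι_sq_zero _⟩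

/-- `Δe` is the exterior algebraic shifted complex of `Γ` (as complexes on the vertex set
`V`): `J_{Δe} = Gin(J_Γ)`, where the generic initial ideal is witnessed by a nonempty
Zariski open subset of `GL(V)` (the nonvanishing locus of a nonzero polynomial in the
matrix entries). -/
def IsExteriorShift (K : Type*) [Field K] (V : Finset ℕ) (Γ Δe : Set (Finset ℕ)) : Prop :=
  ∃ p : MvPolynomial (Fin V.card × Fin V.card) K, p ≠ 0 ∧
    ∀ M : Matrix (Fin V.card) (Fin V.card) K, IsUnit M.det →
      MvPolynomial.eval (fun q => M q.1 q.2) p ≠ 0 →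
      extInitialIdeal K (Ideal.map (extAlgMap K V M) (extFaceIdeal K V Γ)) =
        extFaceIdeal K V Δe

/-- The simplicial complex on `V` whose exterior face ideal is the (monomial) ideal `J`. -/
noncomputable def complexOfExtIdeal (K : Type*) [Field K] (V : Finset ℕ)
    (J : Ideal (ExtAlg K)) : Set (Finset ℕ) :=
  {F | F ⊆ V ∧ eMon K F ∉ J}

/-- Nongeneric exterior shifting `Δ_φ(Γ)`, defined by `J_{Δ_φ(Γ)} = in(φ(J_Γ))` for an
individual linear change of coordinates `φ` given by the matrix `M`. -/
noncomputable def DeltaPhi (K : Type*) [Field K] (V : Finset ℕ)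
    (M : Matrix (Fin V.card) (Fin V.card) K) (Γ : Set (Finset ℕ)) : Set (Finset ℕ) :=
  complexOfExtIdeal K V (extInitialIdeal K (Ideal.map (extAlgMap K V M) (extFaceIdeal K V Γ)))

/-- The shifting-theoretic upper bound relation for a `(d-1)`-dimensional complex `Γ` on the
vertex set `V`: `Δᵉ(Γ) ⊆ Δ(V,d)`. -/
def ShiftingUBR (K : Type*) [Field K] (V : Finset ℕ) (d : ℕ) (Γ : Set (Finset ℕ)) : Prop :=
  ∀ Δe, IsExteriorShift K V Γ Δe → Δe ⊆ DeltaV V d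
/-! Graded pieces, linear systems of parameters, the Cohen–Macaulay property and the strong
Lefschetz property for graded quotients `A = K[x_1,…,x_n]/I`. -/

/-- The degree-`k` homogeneous component of the graded quotient `S/I` (the image of the
degree-`k` homogeneous polynomials). -/
noncomputable def quotPiece {K : Type*} [Field K] {n : ℕ}
    (I : Ideal (MvPolynomial (Fin n) K)) (k : ℕ) :
    Submodule K (MvPolynomial (Fin n) K ⧸ I) :=
  (MvPolynomial.homogeneousSubmodule (Fin n) K k).map (Ideal.Quotient.mkₐ K I).toLinearMap

/-- `θ_1, …, θ_d` is a linear system of parameters of `S/I`: the `θ_a` are linear forms and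
the quotient `S/(I + (θ_1,…,θ_d))` has Krull dimension `≤ 0`. -/
def IsLSOP {K : Type*} [Field K] {n : ℕ} (I : Ideal (MvPolynomial (Fin n) K)) (d : ℕ)
    (θ : Fin d → MvPolynomial (Fin n) K) : Prop :=
  (∀ a, (θ a).IsHomogeneous 1) ∧
    ringKrullDim (MvPolynomial (Fin n) K ⧸ (I ⊔ Ideal.span (Set.range θ))) ≤ 0

set_option synthInstance.maxHeartbeats 1000000 in
/-- The graded quotient `A = S/I` is Cohen–Macaulay: a linear system of parameters of
length `d = dim A` forms a regular `A`-sequence. -/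
def IsCMIdeal {K : Type*} [Field K] {n : ℕ} (I : Ideal (MvPolynomial (Fin n) K)) : Prop :=
  ∃ d : ℕ, ringKrullDim (MvPolynomial (Fin n) K ⧸ I) = d ∧
    ∃ θ : Fin d → MvPolynomial (Fin n) K, IsLSOP I d θ ∧
      RingTheory.Sequence.IsRegular (MvPolynomial (Fin n) K ⧸ I)
        ((List.ofFn θ).map (⇑(Ideal.Quotient.mk I)))

/-- The graded quotient `A = S/I` has the strong Lefschetz property: `A` is Cohen–Macaulay
and there are an l.s.o.p. `θ_1, …, θ_d` (`d = dim A`) and a linear form `ω` such that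
`ω^{s-2i} : (A/θA)_i → (A/θA)_{s-i}` is bijective for `0 ≤ i ≤ s/2`, where
`s = max{k : (A/θA)_k ≠ 0}`. -/
def HasSLPIdeal {K : Type*} [Field K] {n : ℕ} (I : Ideal (MvPolynomial (Fin n) K)) : Prop :=
  IsCMIdeal I ∧
    ∃ d : ℕ, ringKrullDim (MvPolynomial (Fin n) K ⧸ I) = d ∧
      ∃ θ : Fin d → MvPolynomial (Fin n) K, IsLSOP I d θ ∧
        ∃ ω : MvPolynomial (Fin n) K, ω.IsHomogeneous 1 ∧
          ∃ s : ℕ,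
            (quotPiece (I ⊔ Ideal.span (Set.range θ)) s ≠ ⊥ ∧
              ∀ k, s < k → quotPiece (I ⊔ Ideal.span (Set.range θ)) k = ⊥) ∧
            ∀ i : ℕ, 2 * i ≤ s →
              Set.BijOn
                (fun x => (Ideal.Quotient.mk (I ⊔ Ideal.span (Set.range θ)) ω) ^ (s - 2 * i) * x)
                (quotPiece (I ⊔ Ideal.span (Set.range θ)) i)
                (quotPiece (I ⊔ Ideal.span (Set.range θ)) (s - i))

/-- A simplicial complex is Cohen–Macaulay over `K` if its Stanley–Reisner ring is. -/
def ComplexCM (K : Type*) [Field K] (n : ℕ) (Γ : Set (Finset ℕ)) : Prop :=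
  IsCMIdeal (srIdeal K n Γ)

/-- A `(d-1)`-dimensional complex `Γ` has the strong Lefschetz property if `h_d(Γ) > 0` and
its Stanley–Reisner ring has the strong Lefschetz property. -/
def ComplexSLP (K : Type*) [Field K] (n d : ℕ) (Γ : Set (Finset ℕ)) : Prop :=
  0 < hvec d Γ d ∧ HasSLPIdeal (srIdeal K n Γ)

/-- A `1`-dimensional simplicial sphere (a cycle): a complex all of whose faces are edges or
smaller, every vertex lying in exactly two edges, whose edge graph is connected. -/
def IsCycleComplex (V : Finset ℕ) (Γ : Set (Finset ℕ)) : Prop :=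
  SimplicialComplexOn V Γ ∧ (∀ F ∈ Γ, F.card ≤ 2) ∧
    (∀ v ∈ V, {e | e ∈ Γ ∧ e.card = 2 ∧ v ∈ e}.ncard = 2) ∧
    ∀ u ∈ V, ∀ v ∈ V,
      Relation.ReflTransGen (fun a b : ℕ => ({a, b} : Finset ℕ) ∈ Γ) u v

open MvPolynomial in
lemma homogeneousComponent_mul_of_isHomogeneous {σ R : Type*} [CommSemiring R]
    {g : MvPolynomial σ R} {e : ℕ} (hg : g.IsHomogeneous e) (f : MvPolynomial σ R) (k : ℕ) :
    homogeneousComponent k (f * g) =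
      if e ≤ k then homogeneousComponent (k - e) f * g else 0 := by
  classical
  have key : ∀ i, homogeneousComponent k (homogeneousComponent i f * g) =
      if i + e = k then homogeneousComponent i f * g else 0 := by
    intro i
    have := homogeneousComponent_of_mem (m := k)
      ((homogeneousComponent_isHomogeneous i f).mul hg)
    simpa [eq_comm] using this
  conv_lhs => rw [← sum_homogeneousComponent f, Finset.sum_mul, map_sum]
  simp only [key]
  split_ifs with h
  · have : ∀ i, i + e = k ↔ i = k - e := fun i => by omega
    simp only [this, Finset.sum_ite_eq', Finset.mem_range]
    split_ifs with h'
    · rfl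
    · rw [homogeneousComponent_eq_zero _ _ (by omega), zero_mul]
  · exact Finset.sum_eq_zero fun i _ => if_neg (by omega)

section HilbertFunction

open MvPolynomial

variable {K : Type*} [Field K] {n : ℕ}

/-- `I` contains the homogeneous components of its elements. -/
def IsHomIdeal (I : Ideal (MvPolynomial (Fin n) K)) : Prop :=
  ∀ f ∈ I, ∀ k, homogeneousComponent k f ∈ I

lemma IsHomIdeal.sup {I J : Ideal (MvPolynomial (Fin n) K)} (hI : IsHomIdeal I)
    (hJ : IsHomIdeal J) : IsHomIdeal (I ⊔ J) := by
  intro f hf k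
  obtain ⟨a, ha, b, hb, rfl⟩ := Submodule.mem_sup.1 hf
  rw [map_add]
  exact Submodule.add_mem_sup (hI a ha k) (hJ b hb k)

/-- The colon ideal `I : x`. -/
noncomputable def colonIdeal (I : Ideal (MvPolynomial (Fin n) K)) (x : MvPolynomial (Fin n) K) :
    Ideal (MvPolynomial (Fin n) K) :=
  Submodule.comap (LinearMap.mulLeft (MvPolynomial (Fin n) K) x) I

lemma mem_colonIdeal {I : Ideal (MvPolynomial (Fin n) K)} {x f : MvPolynomial (Fin n) K} :
    f ∈ colonIdeal I x ↔ x * f ∈ I := Iff.rfl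

lemma IsHomIdeal.colonIdeal {I : Ideal (MvPolynomial (Fin n) K)} (hI : IsHomIdeal I)
    {x : MvPolynomial (Fin n) K} {e : ℕ} (hx : x.IsHomogeneous e) :
    IsHomIdeal (colonIdeal I x) := by
  intro f hf k
  have := hI _ (mem_colonIdeal.1 hf) (k + e)
  rw [mul_comm, homogeneousComponent_mul_of_isHomogeneous hx, if_pos (by omega),
    Nat.add_sub_cancel, mul_comm] at this
  exact this

/-- The degree `k` part of an ideal, as a space of polynomials. -/
noncomputable def degPart (I : Ideal (MvPolynomial (Fin n) K)) (k : ℕ) :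
    Submodule K (MvPolynomial (Fin n) K) :=
  I.restrictScalars K ⊓ homogeneousSubmodule (Fin n) K k

lemma mem_degPart {I : Ideal (MvPolynomial (Fin n) K)} {k : ℕ} {f : MvPolynomial (Fin n) K} :
    f ∈ degPart I k ↔ f ∈ I ∧ f.IsHomogeneous k := Iff.rfl

instance finite_homogeneousSubmodule (k : ℕ) :
    Module.Finite K (homogeneousSubmodule (Fin n) K k) :=
  Module.Finite.iff_fg.2 (homogeneousSubmodule_fg (σ := Fin n) (R := K) k)

lemma degPart_le (I : Ideal (MvPolynomial (Fin n) K)) (k : ℕ) :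
    degPart I k ≤ homogeneousSubmodule (Fin n) K k := inf_le_right

instance finite_degPart (I : Ideal (MvPolynomial (Fin n) K)) (k : ℕ) :
    Module.Finite K (degPart I k) := Submodule.finiteDimensional_of_le (degPart_le I k)

/-- The Hilbert function of `S / I`. -/
noncomputable def hilb (I : Ideal (MvPolynomial (Fin n) K)) (k : ℕ) : ℕ :=
  Module.finrank K (quotPiece I k)

lemma hilb_add_finrank_degPart (I : Ideal (MvPolynomial (Fin n) K)) (k : ℕ) :
    hilb I k + Module.finrank K (degPart I k) =
      Module.finrank K (homogeneousSubmodule (Fin n) K k) := by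
  have h := ((Ideal.Quotient.mkₐ K I).toLinearMap.domRestrict
    (homogeneousSubmodule (Fin n) K k)).finrank_range_add_finrank_ker
  rw [LinearMap.range_domRestrict] at h
  rw [← h, hilb, quotPiece, LinearMap.ker_domRestrict]
  congr 1
  have e : degPart I k = ((LinearMap.ker (Ideal.Quotient.mkₐ K I).toLinearMap).submoduleOf
      (homogeneousSubmodule (Fin n) K k)).map (Submodule.subtype _) := by
    ext f
    simp [mem_degPart, Submodule.submoduleOf, Ideal.Quotient.eq_zero_iff_mem, and_comm]
  rw [e]
  exact (Submodule.equivMapOfInjective _ Subtype.val_injective _).finrank_eq.symm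

lemma hilb_mono {I J : Ideal (MvPolynomial (Fin n) K)} {k : ℕ}
    (h : ∀ f, f.IsHomogeneous k → f ∈ I → f ∈ J) : hilb J k ≤ hilb I k := by
  have h1 := hilb_add_finrank_degPart I k
  have h2 := hilb_add_finrank_degPart J k
  have : degPart I k ≤ degPart J k := fun f hf => ⟨h f hf.2 hf.1, hf.2⟩
  have := Submodule.finrank_mono this
  omega

lemma mem_of_hilb_le {I J : Ideal (MvPolynomial (Fin n) K)} {k : ℕ} (hIJ : I ≤ J)
    (h : hilb I k ≤ hilb J k) {f : MvPolynomial (Fin n) K} (hf : f.IsHomogeneous k)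
    (hfJ : f ∈ J) : f ∈ I := by
  have h1 := hilb_add_finrank_degPart I k
  have h2 := hilb_add_finrank_degPart J k
  have hle : degPart I k ≤ degPart J k := fun f hf => ⟨hIJ hf.1, hf.2⟩
  have := Submodule.eq_of_le_of_finrank_le hle (by omega)
  have hf' : f ∈ degPart J k := ⟨hfJ, hf⟩
  rw [← this] at hf'
  exact hf'.1

lemma hilb_top (k : ℕ) : hilb (⊤ : Ideal (MvPolynomial (Fin n) K)) k = 0 := by
  have : Subsingleton (MvPolynomial (Fin n) K ⧸ (⊤ : Ideal (MvPolynomial (Fin n) K))) :=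
    Ideal.Quotient.subsingleton_iff.2 rfl
  exact Module.finrank_zero_of_subsingleton

lemma hilb_eq_zero_iff {I : Ideal (MvPolynomial (Fin n) K)} {k : ℕ} :
    hilb I k = 0 ↔ ∀ f, f.IsHomogeneous k → f ∈ I := by
  constructor
  · intro h f hf
    exact mem_of_hilb_le (le_top) (by rw [h]; exact Nat.zero_le _) hf trivial
  · intro h
    have := hilb_mono (I := ⊤) (J := I) (k := k) (fun f hf _ => h f hf)
    rw [hilb_top] at this
    omega

lemma hilb_zero_sup_span {I : Ideal (MvPolynomial (Fin n) K)} (hI : IsHomIdeal I)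
    {x : MvPolynomial (Fin n) K} (hx : x.IsHomogeneous 1) :
    hilb (I ⊔ Ideal.span {x}) 0 = hilb I 0 := by
  apply le_antisymm
  · exact hilb_mono fun f _ hf => Ideal.mem_sup_left hf
  · apply hilb_mono
    intro f hf hfI
    obtain ⟨a, ha, b, hb, rfl⟩ := Submodule.mem_sup.1 hfI
    obtain ⟨c, rfl⟩ := Ideal.mem_span_singleton'.1 hb
    rw [← homogeneousComponent_eq_self hf, map_add,
      homogeneousComponent_mul_of_isHomogeneous hx, if_neg (by omega), add_zero]
    exact hI a ha 0

lemma hilb_succ {I : Ideal (MvPolynomial (Fin n) K)} (hI : IsHomIdeal I)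
    {x : MvPolynomial (Fin n) K} (hx : x.IsHomogeneous 1) (k : ℕ) :
    hilb I (k + 1) = hilb (I ⊔ Ideal.span {x}) (k + 1) + hilb (colonIdeal I x) k := by
  by_cases hx0 : x = 0
  · subst hx0
    have : colonIdeal I 0 = ⊤ := by
      rw [eq_top_iff]; intro f _; rw [mem_colonIdeal, zero_mul]; exact I.zero_mem
    rw [this, hilb_top, Ideal.span_singleton_eq_bot.2 rfl, sup_bot_eq, add_zero]
  have inj : Function.Injective (LinearMap.mulLeft K x) := fun a b h =>
    mul_left_cancel₀ hx0 h
  have e1 : degPart (I ⊔ Ideal.span {x}) (k + 1) =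
      degPart I (k + 1) ⊔ (homogeneousSubmodule (Fin n) K k).map (LinearMap.mulLeft K x) := by
    ext f
    constructor
    · rintro ⟨hfI, hf⟩
      obtain ⟨a, ha, b, hb, rfl⟩ := Submodule.mem_sup.1 hfI
      obtain ⟨c, rfl⟩ := Ideal.mem_span_singleton'.1 hb
      rw [← homogeneousComponent_eq_self hf, map_add,
        homogeneousComponent_mul_of_isHomogeneous hx, if_pos (by omega)]
      refine Submodule.add_mem_sup ⟨hI a ha _, homogeneousComponent_isHomogeneous _ _⟩
        ⟨_, homogeneousComponent_isHomogeneous _ c, mul_comm _ _⟩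
    · intro hf
      obtain ⟨a, ha, b, ⟨c, hc, rfl⟩, rfl⟩ := Submodule.mem_sup.1 hf
      refine ⟨Submodule.add_mem_sup ha.1 ?_, ha.2.add ?_⟩
      · exact Ideal.mul_mem_right _ _ (Ideal.mem_span_singleton_self x)
      · rw [add_comm k]; exact hx.mul hc
  have e2 : degPart I (k + 1) ⊓ (homogeneousSubmodule (Fin n) K k).map (LinearMap.mulLeft K x) =
      (degPart (colonIdeal I x) k).map (LinearMap.mulLeft K x) := by
    ext f
    constructor
    · rintro ⟨h1, ⟨c, hc, rfl⟩⟩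
      exact ⟨c, ⟨h1.1, hc⟩, rfl⟩
    · rintro ⟨c, ⟨h1, hc⟩, rfl⟩
      refine ⟨⟨h1, ?_⟩, ⟨c, hc, rfl⟩⟩
      rw [add_comm k]; exact hx.mul hc
  have h := Submodule.finrank_sup_add_finrank_inf_eq (degPart I (k + 1))
    ((homogeneousSubmodule (Fin n) K k).map (LinearMap.mulLeft K x))
  rw [← e1, e2, ← (Submodule.equivMapOfInjective _ inj _).finrank_eq,
    ← (Submodule.equivMapOfInjective _ inj _).finrank_eq] at h
  have h1 := hilb_add_finrank_degPart I (k + 1)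
  have h2 := hilb_add_finrank_degPart (I ⊔ Ideal.span {x}) (k + 1)
  have h3 := hilb_add_finrank_degPart (colonIdeal I x) k
  omega

lemma hilb_succ_eq_zero {I : Ideal (MvPolynomial (Fin n) K)} {k : ℕ} (h : hilb I k = 0) :
    hilb I (k + 1) = 0 := by
  rw [hilb_eq_zero_iff] at h ⊢
  intro f hf
  have : f ∈ (homogeneousSubmodule (Fin n) K k) * (homogeneousSubmodule (Fin n) K 1) := by
    rw [← homogeneousSubmodule_one_pow (σ := Fin n) (R := K) (n := k), ← pow_succ, homogeneousSubmodule_one_pow]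
    exact hf
  refine Submodule.mul_induction_on this (fun a ha b hb => I.mul_mem_right _ (h a ha))
    (fun a b => I.add_mem)

lemma hilb_eq_zero_of_le {I : Ideal (MvPolynomial (Fin n) K)} {k l : ℕ} (h : hilb I k = 0)
    (hkl : k ≤ l) : hilb I l = 0 := by
  induction l, hkl using Nat.le_induction with
  | base => exact h
  | succ l _ ih => exact hilb_succ_eq_zero ih

end HilbertFunction

section Semicontinuity

open MvPolynomial

/-- Linear independence at `t = 0` of a polynomial family of vectors spreads to all but finitely
many values of the parameter. -/
lemma exists_finite_linearIndependent_eval {K A : Type*} [Field K] [CommRing A] [Algebra K A]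
    {r : ℕ} (Q : Fin r → Polynomial A)
    (h : LinearIndependent K fun i => (Q i).eval 0) :
    ∃ B : Set K, B.Finite ∧
      ∀ t ∉ B, LinearIndependent K fun i => (Q i).eval (algebraMap K A t) := by
  classical
  have hinj : Function.Injective (Fintype.linearCombination K fun i => (Q i).eval 0) :=
    linearIndependent_iff_injective_fintypeLinearCombination.1 h
  obtain ⟨g, hg⟩ := LinearMap.exists_leftInverse_of_injective _ (LinearMap.ker_eq_bot.2 hinj)
  let P : Matrix (Fin r) (Fin r) (Polynomial K) := fun a b =>
    (Q b).sum fun m c => Polynomial.C (g c a) * Polynomial.X ^ m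
  have hP : ∀ t a b, (P a b).eval t = g ((Q b).eval (algebraMap K A t)) a := by
    intro t a b
    rw [Polynomial.eval_eq_sum (p := Q b)]
    simp only [P, Polynomial.sum_def, Polynomial.eval_finsetSum]
    rw [map_sum, Finset.sum_apply]
    refine Finset.sum_congr rfl fun m _ => ?_
    rw [← map_pow, mul_comm _ (algebraMap K A _), ← Algebra.smul_def, map_smul]
    rw [Polynomial.eval_mul, Polynomial.eval_pow, Polynomial.eval_X, Polynomial.eval_C,
      Pi.smul_apply, smul_eq_mul, mul_comm]
  have hdet : ∀ t, P.det.eval t =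
      (Matrix.of fun a b => g ((Q b).eval (algebraMap K A t)) a).det := by
    intro t
    rw [← Polynomial.coe_evalRingHom, RingHom.map_det]
    congr 1
    ext a b
    exact hP t a b
  have h0 : P.det.eval 0 = 1 := by
    have hone : (Matrix.of fun a b => g ((Q b).eval (algebraMap K A 0)) a) =
        (1 : Matrix (Fin r) (Fin r) K) := by
      ext a b
      have := congrFun (LinearMap.congr_fun hg (Pi.single b 1)) a
      simp only [LinearMap.comp_apply, Fintype.linearCombination_apply_single, one_smul,
        LinearMap.id_apply] at this
      rw [Matrix.of_apply, map_zero, this, Matrix.one_apply, Pi.single_apply]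
    rw [hdet, hone, Matrix.det_one]
  have hne : P.det ≠ 0 := by
    intro h
    rw [h] at h0
    simp at h0
  refine ⟨{t | P.det.IsRoot t}, Polynomial.finite_setOfPred_isRoot hne, fun t ht => ?_⟩
  rw [Fintype.linearIndependent_iff]
  intro c hc
  have hmul : (Matrix.of fun a b => g ((Q b).eval (algebraMap K A t)) a).mulVec c = 0 := by
    ext a
    have := congrFun (congrArg g hc) a
    simp only [map_sum, map_smul, map_zero, Finset.sum_apply, Pi.smul_apply, smul_eq_mul] at this
    simp only [Matrix.mulVec, dotProduct, Matrix.of_apply]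
    rw [← this]
    exact Finset.sum_congr rfl fun _ _ => mul_comm _ _
  have hdt : (Matrix.of fun a b => g ((Q b).eval (algebraMap K A t)) a).det ≠ 0 := by
    rw [← hdet]; exact ht
  exact congrFun (Matrix.eq_zero_of_mulVec_eq_zero hdt hmul)

variable {K : Type*} [Field K] {n : ℕ}

lemma homogeneousComponent_mem_span_of_mem_ideal_span
    {G : Set (MvPolynomial (Fin n) K)} (hG : ∀ g ∈ G, ∃ e, g.IsHomogeneous e)
    {f : MvPolynomial (Fin n) K} (hf : f ∈ Ideal.span G) (k : ℕ) :
    homogeneousComponent k f ∈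
      Submodule.span K {p | ∃ g ∈ G, ∃ u e, g.IsHomogeneous e ∧ e ≤ k ∧
        u.IsHomogeneous (k - e) ∧ p = u * g} := by
  obtain ⟨c, hc, rfl⟩ := Submodule.mem_span_set.1 hf
  rw [Finsupp.sum, map_sum]
  refine Submodule.sum_mem _ fun g hg => ?_
  obtain ⟨e, he⟩ := hG g (hc hg)
  rw [smul_eq_mul, homogeneousComponent_mul_of_isHomogeneous he]
  split_ifs with h
  · exact Submodule.subset_span ⟨g, hc hg, _, e, he, h, homogeneousComponent_isHomogeneous _ _, rfl⟩
  · exact Submodule.zero_mem _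

lemma isHomIdeal_span {G : Set (MvPolynomial (Fin n) K)}
    (hG : ∀ g ∈ G, ∃ e, g.IsHomogeneous e) : IsHomIdeal (Ideal.span G) := by
  intro f hf k
  have : Submodule.span K {p | ∃ g ∈ G, ∃ u e, g.IsHomogeneous e ∧ e ≤ k ∧
        u.IsHomogeneous (k - e) ∧ p = u * g} ≤ (Ideal.span G).restrictScalars K := by
    rw [Submodule.span_le]
    rintro _ ⟨g, hg, u, e, -, -, -, rfl⟩
    exact Ideal.mul_mem_left _ _ (Ideal.subset_span hg)
  exact this (homogeneousComponent_mem_span_of_mem_ideal_span hG hf k)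

/-- All coefficients of the family `Q` are homogeneous of degree `e`. -/
def IsHomFamily (e : ℕ) (Q : Polynomial (MvPolynomial (Fin n) K)) : Prop :=
  ∀ m, (Q.coeff m).IsHomogeneous e

lemma IsHomFamily.eval {e : ℕ} {Q : Polynomial (MvPolynomial (Fin n) K)} (hQ : IsHomFamily e Q)
    (t : K) : (Q.eval (C t)).IsHomogeneous e := by
  rw [Polynomial.eval_eq_sum]
  refine IsHomogeneous.sum _ _ _ fun m _ => ?_
  change (Q.coeff m * C t ^ m).IsHomogeneous e
  rw [← map_pow, mul_comm]
  exact (hQ m).C_mul _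

lemma IsHomFamily.eval_zero {e : ℕ} {Q : Polynomial (MvPolynomial (Fin n) K)}
    (hQ : IsHomFamily e Q) : (Q.eval 0).IsHomogeneous e := by
  simpa using hQ.eval 0

lemma IsHomFamily.const {e : ℕ} {p : MvPolynomial (Fin n) K} (hp : p.IsHomogeneous e) :
    IsHomFamily e (Polynomial.C p) := by
  intro m
  rw [Polynomial.coeff_C]
  split_ifs
  · exact hp
  · exact isHomogeneous_zero _ _ _

lemma IsHomFamily.add {e : ℕ} {P Q : Polynomial (MvPolynomial (Fin n) K)}
    (hP : IsHomFamily e P) (hQ : IsHomFamily e Q) : IsHomFamily e (P + Q) := by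
  intro m
  rw [Polynomial.coeff_add]
  exact (hP m).add (hQ m)

lemma IsHomFamily.X_mul {e : ℕ} {Q : Polynomial (MvPolynomial (Fin n) K)}
    (hQ : IsHomFamily e Q) : IsHomFamily e (Polynomial.X * Q) := by
  rintro (_ | m)
  · rw [Polynomial.mul_coeff_zero, Polynomial.coeff_X_zero, zero_mul]
    exact isHomogeneous_zero _ _ _
  · rw [Polynomial.coeff_X_mul]
    exact hQ m

lemma IsHomFamily.mul {e e' : ℕ} {P Q : Polynomial (MvPolynomial (Fin n) K)}
    (hP : IsHomFamily e P) (hQ : IsHomFamily e' Q) : IsHomFamily (e + e') (P * Q) := by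
  intro m
  rw [Polynomial.coeff_mul]
  exact IsHomogeneous.sum _ _ _ fun x _ => (hP _).mul (hQ _)

lemma IsHomFamily.pow {e : ℕ} {Q : Polynomial (MvPolynomial (Fin n) K)}
    (hQ : IsHomFamily e Q) (m : ℕ) : IsHomFamily (e * m) (Q ^ m) := by
  induction m with
  | zero =>
    rw [pow_zero, mul_zero, ← Polynomial.C_1]
    exact IsHomFamily.const (isHomogeneous_one _ _)
  | succ m ih =>
    rw [pow_succ, mul_add, mul_one]
    exact ih.mul hQ

/-- The ideal generated by the members of a set of polynomial families at `t`. -/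
noncomputable def familyIdeal (𝒬 : Set (Polynomial (MvPolynomial (Fin n) K))) (t : K) :
    Ideal (MvPolynomial (Fin n) K) :=
  Ideal.span ((fun Q => Q.eval (C t)) '' 𝒬)

/-- The families of degree `k` obtained from `𝒬` by multiplication by a constant family. -/
def multiplesOfDegree (𝒬 : Set (Polynomial (MvPolynomial (Fin n) K))) (k : ℕ) :
    Set (Polynomial (MvPolynomial (Fin n) K)) :=
  {P | IsHomFamily k P ∧ ∃ Q ∈ 𝒬, ∃ u, P = Polynomial.C u * Q}

lemma familyIdeal_zero (𝒬 : Set (Polynomial (MvPolynomial (Fin n) K))) :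
    familyIdeal 𝒬 0 = Ideal.span ((fun Q => Q.eval 0) '' 𝒬) := by
  rw [familyIdeal, map_zero]

lemma degPart_familyIdeal_zero {𝒬 : Set (Polynomial (MvPolynomial (Fin n) K))}
    (h𝒬 : ∀ Q ∈ 𝒬, ∃ e, IsHomFamily e Q) (k : ℕ) :
    degPart (familyIdeal 𝒬 0) k =
      Submodule.span K ((fun P => P.eval 0) '' multiplesOfDegree 𝒬 k) := by
  have hhom : ∀ g ∈ (fun Q => Polynomial.eval 0 Q) '' 𝒬, ∃ e, g.IsHomogeneous e := by
    rintro _ ⟨Q, hQ, rfl⟩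
    obtain ⟨e, he⟩ := h𝒬 Q hQ
    exact ⟨e, he.eval_zero⟩
  rw [familyIdeal_zero]
  apply le_antisymm
  · rintro f ⟨hfI, hf⟩
    rw [← homogeneousComponent_eq_self hf]
    refine Submodule.span_le.2 ?_ (homogeneousComponent_mem_span_of_mem_ideal_span hhom hfI k)
    rintro _ ⟨_, ⟨Q, hQ, rfl⟩, u, e, he, hek, hu, rfl⟩
    by_cases h0 : Q.eval 0 = 0
    · simp [h0]
    obtain ⟨e', he'⟩ := h𝒬 Q hQ
    obtain rfl := IsHomogeneous.inj_right he he'.eval_zero h0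
    refine Submodule.subset_span ⟨Polynomial.C u * Q, ⟨?_, Q, hQ, u, rfl⟩, ?_⟩
    · have := (IsHomFamily.const hu).mul he'
      rwa [Nat.sub_add_cancel hek] at this
    · simp
  · rw [Submodule.span_le]
    rintro _ ⟨P, ⟨hP, Q, hQ, u, rfl⟩, rfl⟩
    refine ⟨?_, hP.eval_zero⟩
    have : Q.eval 0 ∈ Ideal.span ((fun Q => Polynomial.eval 0 Q) '' 𝒬) :=
      Ideal.subset_span ⟨Q, hQ, rfl⟩
    simpa using Ideal.mul_mem_left _ u this

/-- Upper semicontinuity of the Hilbert function. -/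
lemma exists_finite_hilb_le {𝒬 : Set (Polynomial (MvPolynomial (Fin n) K))}
    (h𝒬 : ∀ Q ∈ 𝒬, ∃ e, IsHomFamily e Q) (k : ℕ) :
    ∃ B : Set K, B.Finite ∧
      ∀ t ∉ B, hilb (familyIdeal 𝒬 t) k ≤ hilb (familyIdeal 𝒬 0) k := by
  have hfin : Module.Finite K (Submodule.span K
      ((fun P => Polynomial.eval (0 : MvPolynomial (Fin n) K) P) '' multiplesOfDegree 𝒬 k)) := by
    rw [← degPart_familyIdeal_zero h𝒬]
    infer_instance
  obtain ⟨f, hf, -, hli⟩ := Submodule.exists_fun_fin_finrank_span_eq K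
    ((fun P => Polynomial.eval (0 : MvPolynomial (Fin n) K) P) '' multiplesOfDegree 𝒬 k)
  choose P hP hPf using hf
  obtain ⟨B, hB, hBt⟩ := exists_finite_linearIndependent_eval (K := K) P (by simpa [hPf] using hli)
  refine ⟨B, hB, fun t ht => ?_⟩
  have hmem : ∀ i, (P i).eval (C t) ∈ degPart (familyIdeal 𝒬 t) k := by
    intro i
    obtain ⟨hhom, Q, hQ, u, hu⟩ := hP i
    refine ⟨?_, hhom.eval t⟩
    rw [hu]
    have : Q.eval (C t) ∈ familyIdeal 𝒬 t := Ideal.subset_span ⟨Q, hQ, rfl⟩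
    simpa using Ideal.mul_mem_left _ u this
  have hli' : LinearIndependent K
      fun i => (⟨(P i).eval (C t), hmem i⟩ : degPart (familyIdeal 𝒬 t) k) :=
    LinearIndependent.of_comp (Submodule.subtype _) (hBt t ht)
  have hcard := hli'.fintype_card_le_finrank
  rw [Fintype.card_fin, ← degPart_familyIdeal_zero h𝒬] at hcard
  have h1 := hilb_add_finrank_degPart (familyIdeal 𝒬 t) k
  have h2 := hilb_add_finrank_degPart (familyIdeal 𝒬 0) k
  omega

end Semicontinuity

section PartialSums

/-- Partial sums of a sequence of natural numbers. -/
def partialSum (f : ℕ → ℕ) (k : ℕ) : ℕ := ∑ j ∈ Finset.range (k + 1), f j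

lemma partialSum_zero (f : ℕ → ℕ) : partialSum f 0 = f 0 := by simp [partialSum]

lemma partialSum_succ (f : ℕ → ℕ) (k : ℕ) :
    partialSum f (k + 1) = f (k + 1) + partialSum f k := by
  rw [partialSum, Finset.sum_range_succ, add_comm]; rfl

lemma partialSum_mono : Monotone partialSum := fun _ _ h _ => Finset.sum_le_sum fun j _ => h j

lemma partialSum_injective : Function.Injective partialSum := by
  intro f g h
  ext k
  cases k with
  | zero => rw [← partialSum_zero f, h, partialSum_zero]
  | succ k =>
    have := congrFun h (k + 1)
    rw [partialSum_succ, partialSum_succ, h] at this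
    omega

end PartialSums

section NumericalRegularity

open MvPolynomial

variable {K : Type*} [Field K] {n : ℕ}

lemma mem_of_homogeneousComponent_mem {I : Ideal (MvPolynomial (Fin n) K)}
    {f : MvPolynomial (Fin n) K} (h : ∀ k, homogeneousComponent k f ∈ I) : f ∈ I := by
  rw [← sum_homogeneousComponent f]
  exact Ideal.sum_mem _ fun k _ => h k

lemma isHomIdeal_span_singleton {x : MvPolynomial (Fin n) K} {e : ℕ} (hx : x.IsHomogeneous e) :
    IsHomIdeal (Ideal.span {x}) :=
  isHomIdeal_span fun g hg => ⟨e, by rw [Set.mem_singleton_iff.1 hg]; exact hx⟩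

lemma isHomIdeal_ofList {l : List (MvPolynomial (Fin n) K)} (hl : ∀ x ∈ l, x.IsHomogeneous 1) :
    IsHomIdeal (Ideal.ofList l) :=
  isHomIdeal_span fun g hg => ⟨1, hl g hg⟩

lemma le_colonIdeal (I : Ideal (MvPolynomial (Fin n) K)) (x : MvPolynomial (Fin n) K) :
    I ≤ colonIdeal I x := fun _ hf => I.mul_mem_left x hf

lemma hilb_anti {I J : Ideal (MvPolynomial (Fin n) K)} (h : I ≤ J) (k : ℕ) :
    hilb J k ≤ hilb I k := hilb_mono fun _ _ hf => h hf

lemma hilb_le_partialSum {I : Ideal (MvPolynomial (Fin n) K)} (hI : IsHomIdeal I)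
    {x : MvPolynomial (Fin n) K} (hx : x.IsHomogeneous 1) :
    hilb I ≤ partialSum (hilb (I ⊔ Ideal.span {x})) := by
  intro k
  induction k with
  | zero => rw [partialSum_zero, hilb_zero_sup_span hI hx]
  | succ k ih =>
    rw [partialSum_succ, hilb_succ hI hx]
    exact Nat.add_le_add_left ((hilb_anti (le_colonIdeal I x) k).trans ih) _

lemma hilb_eq_partialSum_iff {I : Ideal (MvPolynomial (Fin n) K)} (hI : IsHomIdeal I)
    {x : MvPolynomial (Fin n) K} (hx : x.IsHomogeneous 1) :
    hilb I = partialSum (hilb (I ⊔ Ideal.span {x})) ↔ ∀ f, x * f ∈ I → f ∈ I := by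
  constructor
  · intro h f hf
    refine mem_of_homogeneousComponent_mem fun k => ?_
    refine mem_of_hilb_le (le_colonIdeal I x) ?_ (homogeneousComponent_isHomogeneous k f)
      (hI.colonIdeal hx f hf k)
    have h1 := hilb_succ hI hx k
    have h2 := congrFun h (k + 1)
    rw [partialSum_succ, ← h] at h2
    omega
  · intro h
    have hc : colonIdeal I x = I := le_antisymm h (le_colonIdeal I x)
    ext k
    induction k with
    | zero => rw [partialSum_zero, hilb_zero_sup_span hI hx]
    | succ k ih => rw [partialSum_succ, hilb_succ hI hx, hc, ih]

/-- Multiplication by a list of linear forms is successively injective on `S / I`, expressed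
through Hilbert functions. -/
def NumReg (I : Ideal (MvPolynomial (Fin n) K)) (l : List (MvPolynomial (Fin n) K)) : Prop :=
  hilb I = partialSum^[l.length] (hilb (I ⊔ Ideal.ofList l))

lemma sup_ofList_cons (I : Ideal (MvPolynomial (Fin n) K)) (a : MvPolynomial (Fin n) K)
    (l : List (MvPolynomial (Fin n) K)) :
    I ⊔ Ideal.ofList (a :: l) = I ⊔ Ideal.span {a} ⊔ Ideal.ofList l := by
  rw [Ideal.ofList_cons, sup_assoc]

lemma hilb_le_iterate_partialSum {I : Ideal (MvPolynomial (Fin n) K)} (hI : IsHomIdeal I)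
    {l : List (MvPolynomial (Fin n) K)} (hl : ∀ x ∈ l, x.IsHomogeneous 1) :
    hilb I ≤ partialSum^[l.length] (hilb (I ⊔ Ideal.ofList l)) := by
  induction l generalizing I with
  | nil => simp
  | cons a l ih =>
    have ha := hl a (by simp)
    rw [List.length_cons, Function.iterate_succ_apply', sup_ofList_cons]
    exact (hilb_le_partialSum hI ha).trans (partialSum_mono
      (ih (hI.sup (isHomIdeal_span_singleton ha)) fun x hx => hl x (by simp [hx])))

lemma numReg_cons {I : Ideal (MvPolynomial (Fin n) K)} (hI : IsHomIdeal I)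
    {a : MvPolynomial (Fin n) K} {l : List (MvPolynomial (Fin n) K)}
    (hl : ∀ x ∈ a :: l, x.IsHomogeneous 1) :
    NumReg I (a :: l) ↔
      hilb I = partialSum (hilb (I ⊔ Ideal.span {a})) ∧ NumReg (I ⊔ Ideal.span {a}) l := by
  have ha := hl a (by simp)
  have h1 := hilb_le_partialSum hI ha
  have h2 := hilb_le_iterate_partialSum (hI.sup (isHomIdeal_span_singleton ha))
    (l := l) fun x hx => hl x (by simp [hx])
  rw [NumReg, NumReg, List.length_cons, Function.iterate_succ_apply', sup_ofList_cons]
  constructor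
  · intro h
    have h3 := le_antisymm h1 ((partialSum_mono h2).trans h.ge)
    exact ⟨h3, partialSum_injective (h3.symm.trans h)⟩
  · rintro ⟨h3, h4⟩
    rw [← h4, h3]

lemma hilb_eq_partialSum_of_swap {B : Ideal (MvPolynomial (Fin n) K)} (hB : IsHomIdeal B)
    {a c : MvPolynomial (Fin n) K} (ha : a.IsHomogeneous 1) (hc : c.IsHomogeneous 1)
    (h : hilb B = partialSum (hilb (B ⊔ Ideal.span {a})))
    {N : ℕ} (h0a : hilb (B ⊔ Ideal.span {a}) N = 0) {M : ℕ}
    (h0c : hilb (B ⊔ Ideal.span {c}) M = 0) :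
    hilb B = partialSum (hilb (B ⊔ Ideal.span {c})) := by
  rw [hilb_eq_partialSum_iff hB hc]
  have hnzd := (hilb_eq_partialSum_iff hB ha).1 h
  have hpow : ∀ m f, a ^ m * f ∈ B → f ∈ B := by
    intro m
    induction m with
    | zero => intro f hf; simpa using hf
    | succ m ih =>
      intro f hf
      rw [pow_succ, mul_assoc] at hf
      exact hnzd f (ih _ hf)
  intro f hf
  refine mem_of_homogeneousComponent_mem fun k => hpow (N + M) _ ?_
  have hmem : a ^ (N + M) * homogeneousComponent k f ∈ colonIdeal B c :=
    Ideal.mul_mem_left _ _ (hB.colonIdeal hc f hf k)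
  have hhom : (a ^ (N + M) * homogeneousComponent k f).IsHomogeneous (N + M + k) := by
    have := (ha.pow (N + M)).mul (homogeneousComponent_isHomogeneous k f)
    rwa [one_mul] at this
  refine mem_of_hilb_le (le_colonIdeal B c) ?_ hhom hmem
  have h1 := hilb_succ hB hc (N + M + k)
  have h2 := congrFun h (N + M + k + 1)
  rw [partialSum_succ, ← h, hilb_eq_zero_of_le h0a (by omega)] at h2
  rw [hilb_eq_zero_of_le h0c (by omega)] at h1
  omega

lemma familyIdeal_union (𝒬 ℛ : Set (Polynomial (MvPolynomial (Fin n) K))) (t : K) :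
    familyIdeal (𝒬 ∪ ℛ) t = familyIdeal 𝒬 t ⊔ familyIdeal ℛ t := by
  rw [familyIdeal, Set.image_union, Ideal.span_union]; rfl

lemma IsHomIdeal.span_homogeneous {I : Ideal (MvPolynomial (Fin n) K)} (hI : IsHomIdeal I) :
    Ideal.span {f | f ∈ I ∧ ∃ e, f.IsHomogeneous e} = I := by
  apply le_antisymm
  · exact Ideal.span_le.2 fun f hf => hf.1
  · intro f hf
    exact mem_of_homogeneousComponent_mem fun k =>
      Ideal.subset_span ⟨hI f hf k, k, homogeneousComponent_isHomogeneous k f⟩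

lemma exists_finite_hilb_sup_le {I : Ideal (MvPolynomial (Fin n) K)} (hI : IsHomIdeal I)
    {𝒬 : Set (Polynomial (MvPolynomial (Fin n) K))}
    (h𝒬 : ∀ Q ∈ 𝒬, ∃ e, IsHomFamily e Q) (k : ℕ) :
    ∃ B : Set K, B.Finite ∧
      ∀ t ∉ B, hilb (I ⊔ familyIdeal 𝒬 t) k ≤ hilb (I ⊔ familyIdeal 𝒬 0) k := by
  have key : ∀ t, I ⊔ familyIdeal 𝒬 t =
      familyIdeal (Polynomial.C '' {f | f ∈ I ∧ ∃ e, f.IsHomogeneous e} ∪ 𝒬) t := by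
    intro t
    rw [familyIdeal_union]
    congr 1
    rw [familyIdeal, Set.image_image]
    simp only [Polynomial.eval_C, Set.image_id']
    rw [hI.span_homogeneous]
  simp only [key]
  refine exists_finite_hilb_le ?_ k
  rintro _ (⟨f, ⟨-, e, he⟩, rfl⟩ | hQ)
  · exact ⟨e, IsHomFamily.const he⟩
  · exact h𝒬 _ hQ

lemma familyIdeal_singleton (Q : Polynomial (MvPolynomial (Fin n) K)) (t : K) :
    familyIdeal {Q} t = Ideal.span {Q.eval (C t)} := by
  rw [familyIdeal, Set.image_singleton]

lemma exists_finite_hilb_add_C_mul_eq_zero {I : Ideal (MvPolynomial (Fin n) K)}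
    (hI : IsHomIdeal I) {a b : MvPolynomial (Fin n) K} (ha : a.IsHomogeneous 1)
    (hb : b.IsHomogeneous 1) {k : ℕ} (h : hilb (I ⊔ Ideal.span {a}) k = 0) :
    ∃ B : Set K, B.Finite ∧ ∀ t ∉ B, hilb (I ⊔ Ideal.span {a + C t * b}) k = 0 := by
  obtain ⟨B, hB, hBt⟩ := exists_finite_hilb_sup_le hI
    (𝒬 := {Polynomial.C a + Polynomial.X * Polynomial.C b}) (by
      rintro _ rfl
      exact ⟨1, (IsHomFamily.const ha).add (IsHomFamily.const hb).X_mul⟩) k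
  refine ⟨B, hB, fun t ht => ?_⟩
  have := hBt t ht
  simp only [familyIdeal_singleton, Polynomial.eval_add, Polynomial.eval_C, Polynomial.eval_mul,
    Polynomial.eval_X, map_zero, zero_mul, add_zero] at this
  omega

lemma span_add_C_mul {a b : MvPolynomial (Fin n) K} {t : K} (ht : t ≠ 0) :
    Ideal.span {a + C t * b} = Ideal.span {b + C t⁻¹ * a} := by
  have hC : (C t : MvPolynomial (Fin n) K) * C t⁻¹ = 1 := by
    rw [← C_mul, mul_inv_cancel₀ ht, C_1]
  apply le_antisymm <;> rw [Ideal.span_singleton_le_span_singleton]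
  · exact ⟨C t, by linear_combination (-a) * hC⟩
  · exact ⟨C t⁻¹, by linear_combination (-b) * hC⟩

/-- All linear systems of parameters behave numerically alike. -/
lemma NumReg.of_hilb_eq_zero [Infinite K] {I : Ideal (MvPolynomial (Fin n) K)}
    (hI : IsHomIdeal I) {l₀ l : List (MvPolynomial (Fin n) K)}
    (hl₀ : ∀ x ∈ l₀, x.IsHomogeneous 1) (hl : ∀ x ∈ l, x.IsHomogeneous 1)
    (hlen : l₀.length = l.length) (h : NumReg I l₀)
    {N M : ℕ} (hN : hilb (I ⊔ Ideal.ofList l₀) N = 0) (hM : hilb (I ⊔ Ideal.ofList l) M = 0) :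
    NumReg I l := by
  induction l₀ generalizing I l N M with
  | nil =>
    obtain rfl : l = [] := List.length_eq_zero_iff.1 hlen.symm
    exact h
  | cons a l₀ ih =>
    obtain ⟨b, l, rfl⟩ : ∃ b l', l = b :: l' := by
      cases l with
      | nil => simp at hlen
      | cons b l => exact ⟨b, l, rfl⟩
    have ha := hl₀ a (by simp)
    have hb := hl b (by simp)
    have hl₀' : ∀ x ∈ l₀, x.IsHomogeneous 1 := fun x hx => hl₀ x (by simp [hx])
    have hl' : ∀ x ∈ l, x.IsHomogeneous 1 := fun x hx => hl x (by simp [hx])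
    have hI₀ := hI.sup (isHomIdeal_ofList hl₀')
    have hI₁ := hI.sup (isHomIdeal_ofList hl')
    have comm : ∀ (x : MvPolynomial (Fin n) K) l, I ⊔ Ideal.ofList (x :: l) =
        I ⊔ Ideal.ofList l ⊔ Ideal.span {x} := fun x l => by
      rw [sup_ofList_cons, sup_right_comm]
    rw [comm] at hN hM
    obtain ⟨B₀, hB₀, h₀⟩ := exists_finite_hilb_add_C_mul_eq_zero hI₀ ha hb hN
    obtain ⟨B₁, hB₁, h₁⟩ := exists_finite_hilb_add_C_mul_eq_zero hI₁ hb ha hM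
    obtain ⟨t, ht⟩ := ((hB₀.union (hB₁.preimage inv_injective.injOn)).union
      (Set.finite_singleton (0 : K))).exists_notMem
    simp only [Set.mem_union, Set.mem_preimage, Set.mem_singleton_iff, not_or] at ht
    obtain ⟨⟨ht₀, ht₁⟩, htz⟩ := ht
    have hc0 := h₀ t ht₀
    have hc1 := h₁ _ ht₁
    rw [← span_add_C_mul htz] at hc1
    have hc : (a + C t * b).IsHomogeneous 1 := ha.add (hb.C_mul t)
    generalize a + C t * b = c at hc hc0 hc1
    have swap : ∀ {l : List (MvPolynomial (Fin n) K)}, (∀ x ∈ l, x.IsHomogeneous 1) →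
        ∀ {x y}, x.IsHomogeneous 1 → y.IsHomogeneous 1 → ∀ {N M},
        hilb (I ⊔ Ideal.ofList l ⊔ Ideal.span {x}) N = 0 →
        hilb (I ⊔ Ideal.ofList l ⊔ Ideal.span {y}) M = 0 →
        NumReg I (x :: l) → NumReg I (y :: l) := by
      intro l hl x y hx hy N M hN hM hreg
      have hJ := hI.sup (isHomIdeal_ofList hl)
      have e1 : hilb I = partialSum^[l.length]
          (partialSum (hilb (I ⊔ Ideal.ofList l ⊔ Ideal.span {x}))) := by
        rw [← comm, ← Function.iterate_succ_apply]; exact hreg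
      have e2 : hilb I ≤ partialSum^[l.length] (hilb (I ⊔ Ideal.ofList l)) :=
        hilb_le_iterate_partialSum hI hl
      have e3 : hilb (I ⊔ Ideal.ofList l) =
          partialSum (hilb (I ⊔ Ideal.ofList l ⊔ Ideal.span {x})) := by
        refine partialSum_injective.iterate l.length ?_
        rw [← e1]
        refine le_antisymm ?_ e2
        rw [e1]
        exact partialSum_mono.iterate _ (hilb_le_partialSum hJ hx)
      have e4 := hilb_eq_partialSum_of_swap hJ hx hy e3 hN hM
      rw [NumReg, List.length_cons, Function.iterate_succ_apply, comm, ← e4, e3]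
      exact e1
    have hca := swap hl₀' ha hc hN hc0 h
    have hIc := hI.sup (isHomIdeal_span_singleton hc)
    rw [numReg_cons hI (by simpa using ⟨hc, hl₀'⟩)] at hca
    have := ih hIc hl₀' hl' (by simpa using hlen) hca.2
      (by rw [sup_right_comm]; exact hc0) (by rw [sup_right_comm]; exact hc1)
    exact swap hl' hc hb hc1 hM ((numReg_cons hI (by simpa using ⟨hc, hl'⟩)).2 ⟨hca.1, this⟩)

end NumericalRegularity

section RegularSequences

open RingTheory.Sequence Pointwise

lemma isWeaklyRegular_quotient_iff {R : Type*} [CommRing R] (I : Ideal R) (l : List R) :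
    IsWeaklyRegular (R ⧸ I) (l.map (Ideal.Quotient.mk I)) ↔
      ∀ i (h : i < l.length), ∀ f, l[i] * f ∈ I ⊔ Ideal.ofList (l.take i) →
        f ∈ I ⊔ Ideal.ofList (l.take i) := by
  have key : ∀ (J : Ideal R) (f : R),
      Ideal.Quotient.mk I f ∈ (J • ⊤ : Submodule R (R ⧸ I)) ↔ f ∈ I ⊔ J := by
    intro J f
    rw [← Ideal.Quotient.algebraMap_eq, Ideal.smul_top_eq_map, Submodule.restrictScalars_mem,
      Ideal.Quotient.algebraMap_eq, ← Ideal.mem_comap,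
      Ideal.comap_map_of_surjective' _ Ideal.Quotient.mk_surjective, Ideal.mk_ker, sup_comm]
  rw [← Ideal.Quotient.algebraMap_eq, isWeaklyRegular_map_algebraMap_iff, isWeaklyRegular_iff]
  refine forall₂_congr fun i h => ?_
  rw [isSMulRegular_quotient_iff_mem_of_smul_mem]
  constructor
  · intro H f hf
    rw [← key] at hf ⊢
    apply H
    rw [Algebra.smul_def, Ideal.Quotient.algebraMap_eq, ← map_mul]
    exact hf
  · intro H x hx
    obtain ⟨f, rfl⟩ := Ideal.Quotient.mk_surjective x
    rw [Algebra.smul_def, Ideal.Quotient.algebraMap_eq, ← map_mul] at hx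
    rw [key] at hx ⊢
    exact H f hx

open MvPolynomial

variable {K : Type*} [Field K] {n : ℕ}

lemma numReg_iff_forall {I : Ideal (MvPolynomial (Fin n) K)} (hI : IsHomIdeal I)
    {l : List (MvPolynomial (Fin n) K)} (hl : ∀ x ∈ l, x.IsHomogeneous 1) :
    NumReg I l ↔ ∀ i (h : i < l.length), ∀ f, l[i] * f ∈ I ⊔ Ideal.ofList (l.take i) →
        f ∈ I ⊔ Ideal.ofList (l.take i) := by
  induction l generalizing I with
  | nil => simp [NumReg]
  | cons a l ih =>
    have ha := hl a (by simp)
    rw [numReg_cons hI hl, ih (hI.sup (isHomIdeal_span_singleton ha)) fun x hx => hl x (by simp [hx]),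
      hilb_eq_partialSum_iff hI ha]
    constructor
    · rintro ⟨h1, h2⟩ (_ | i) h f
      · simpa using h1 f
      · simpa [Ideal.ofList_cons, sup_assoc] using h2 i (by simpa using h) f
    · intro H
      refine ⟨fun f => by simpa using! H 0 (by simp) f, fun i h f => ?_⟩
      have := H (i + 1) (by simpa using h) f
      rw [List.take_succ_cons, Ideal.ofList_cons, ← sup_assoc] at this
      exact this

lemma isWeaklyRegular_iff_numReg {I : Ideal (MvPolynomial (Fin n) K)} (hI : IsHomIdeal I)
    {l : List (MvPolynomial (Fin n) K)} (hl : ∀ x ∈ l, x.IsHomogeneous 1) :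
    IsWeaklyRegular (MvPolynomial (Fin n) K ⧸ I) (l.map (Ideal.Quotient.mk I)) ↔ NumReg I l := by
  rw [isWeaklyRegular_quotient_iff, numReg_iff_forall hI hl]

lemma NumReg.isRegular {I : Ideal (MvPolynomial (Fin n) K)} (hI : IsHomIdeal I)
    {l : List (MvPolynomial (Fin n) K)} (hl : ∀ x ∈ l, x.IsHomogeneous 1) (h : NumReg I l)
    {k : ℕ} (hk : hilb (I ⊔ Ideal.ofList l) k ≠ 0) :
    IsRegular (MvPolynomial (Fin n) K ⧸ I) (l.map (Ideal.Quotient.mk I)) := by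
  refine ⟨(isWeaklyRegular_iff_numReg hI hl).2 h, fun htop => hk ?_⟩
  rw [smul_eq_mul, Ideal.mul_top, ← Ideal.map_ofList] at htop
  have : I ⊔ Ideal.ofList l = ⊤ := by
    have := Ideal.comap_map_of_surjective' _ (Ideal.Quotient.mk_surjective (I := I)) (Ideal.ofList l)
    rw [← htop, Ideal.mk_ker, Ideal.comap_top] at this
    rw [sup_comm, ← this]
  rw [this, hilb_top]

lemma ofList_ofFn {R : Type*} [CommRing R] {d : ℕ} (θ : Fin d → R) :
    Ideal.ofList (List.ofFn θ) = Ideal.span (Set.range θ) := by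
  rw [Ideal.ofList]
  congr 1
  ext x
  simp [List.mem_ofFn]

end RegularSequences

section StanleyReisner

open MvPolynomial

variable {K : Type*} [Field K] {n : ℕ}

/-- The set of (labels of) variables that occur in a monomial. -/
def faceSupport (u : Fin n →₀ ℕ) : Finset ℕ := u.support.image fun a : Fin n => (a : ℕ) + 1

lemma succ_mem_faceSupport {u : Fin n →₀ ℕ} {a : Fin n} :
    (a : ℕ) + 1 ∈ faceSupport u ↔ u a ≠ 0 := by
  simp [faceSupport, Fin.val_inj]

lemma faceSupport_subset (u : Fin n →₀ ℕ) : faceSupport u ⊆ Finset.Icc 1 n := by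
  intro v hv
  obtain ⟨a, -, rfl⟩ := Finset.mem_image.1 hv
  have := a.isLt
  simp only [Finset.mem_Icc]
  omega

lemma exists_fin_of_mem_Icc {v : ℕ} (hv : v ∈ Finset.Icc 1 n) : ∃ a : Fin n, (a : ℕ) + 1 = v := by
  rw [Finset.mem_Icc] at hv
  exact ⟨⟨v - 1, by omega⟩, by simp; omega⟩

/-- The exponent vector of the squarefree monomial of a face. -/
noncomputable def faceExponent (n : ℕ) (F : Finset ℕ) : Fin n →₀ ℕ :=
  ∑ a ∈ Finset.univ.filter (fun a : Fin n => (a : ℕ) + 1 ∈ F), Finsupp.single a 1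

lemma faceExponent_apply (F : Finset ℕ) (a : Fin n) :
    faceExponent n F a = if (a : ℕ) + 1 ∈ F then 1 else 0 := by
  rw [faceExponent, Finsupp.finsetSum_apply]
  simp [Finsupp.single_apply]

lemma faceMonomial_eq_monomial (F : Finset ℕ) :
    faceMonomial K n F = monomial (faceExponent n F) 1 := by
  rw [faceMonomial, faceExponent, monomial_sum_one]
  rfl

lemma faceExponent_le_iff {F : Finset ℕ} (hF : F ⊆ Finset.Icc 1 n) (u : Fin n →₀ ℕ) :
    faceExponent n F ≤ u ↔ F ⊆ faceSupport u := by
  rw [Finsupp.le_def]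
  constructor
  · intro h v hv
    obtain ⟨a, rfl⟩ := exists_fin_of_mem_Icc (hF hv)
    have := h a
    rw [faceExponent_apply, if_pos hv] at this
    exact succ_mem_faceSupport.2 (by omega)
  · intro h a
    rw [faceExponent_apply]
    split_ifs with ha
    · have := succ_mem_faceSupport.1 (h ha)
      omega
    · exact Nat.zero_le _

/-- `Γ` is closed under taking subsets. -/
def IsDownClosed (Γ : Set (Finset ℕ)) : Prop := ∀ F ∈ Γ, ∀ G, G ⊆ F → G ∈ Γ

lemma mem_srIdeal {Γ : Set (Finset ℕ)} (hΓ : IsDownClosed Γ) {f : MvPolynomial (Fin n) K} :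
    f ∈ srIdeal K n Γ ↔ ∀ u ∈ f.support, faceSupport u ∉ Γ := by
  have : srIdeal K n Γ = Ideal.span ((fun s => monomial s (1 : K)) ''
      {e | ∃ F : Finset ℕ, F ⊆ Finset.Icc 1 n ∧ F ∉ Γ ∧ e = faceExponent n F}) := by
    rw [srIdeal]
    congr 1
    ext f
    constructor
    · rintro ⟨F, h1, h2, rfl⟩
      exact ⟨_, ⟨F, h1, h2, rfl⟩, (faceMonomial_eq_monomial F).symm⟩
    · rintro ⟨_, ⟨F, h1, h2, rfl⟩, rfl⟩
      exact ⟨F, h1, h2, (faceMonomial_eq_monomial F).symm⟩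
  rw [this, mem_ideal_span_monomial_image]
  refine forall₂_congr fun u _ => ?_
  constructor
  · rintro ⟨_, ⟨F, h1, h2, rfl⟩, hle⟩ h
    exact h2 (hΓ _ h _ ((faceExponent_le_iff h1 u).1 hle))
  · intro h
    exact ⟨_, ⟨_, faceSupport_subset u, h, rfl⟩,
      (faceExponent_le_iff (faceSupport_subset u) u).2 subset_rfl⟩

lemma isHomIdeal_srIdeal (Γ : Set (Finset ℕ)) : IsHomIdeal (srIdeal K n Γ) := by
  refine isHomIdeal_span ?_
  rintro _ ⟨F, -, -, rfl⟩
  rw [faceMonomial_eq_monomial]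
  exact ⟨_, isHomogeneous_monomial _ rfl⟩

lemma finrank_supported (s : Finset (Fin n →₀ ℕ)) :
    Module.finrank K (AddMonoidAlgebra.supported K K (s : Set (Fin n →₀ ℕ))) = s.card := by
  rw [(AddMonoidAlgebra.supportedEquivFinsupp (S := K) (s : Set (Fin n →₀ ℕ))).finrank_eq,
    Module.finrank_finsupp_self]
  simp

open Classical in
lemma hilb_srIdeal_eq_card {Γ : Set (Finset ℕ)} (hΓ : IsDownClosed Γ) (k : ℕ) :
    hilb (srIdeal K n Γ) k =
      ((Finset.finsuppAntidiag Finset.univ k).filter fun u : Fin n →₀ ℕ => faceSupport u ∈ Γ).card := by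
  have hT : ∀ u : Fin n →₀ ℕ, u ∈ Finset.finsuppAntidiag Finset.univ k ↔ u.degree = k := by
    intro u
    simp [Finsupp.degree_eq_sum]
  have h1 : homogeneousSubmodule (Fin n) K k =
      AddMonoidAlgebra.supported K K
        ((Finset.finsuppAntidiag Finset.univ k : Finset (Fin n →₀ ℕ)) : Set (Fin n →₀ ℕ)) := by
    rw [homogeneousSubmodule_eq_finsupp_supported]
    congr 1
    ext u
    simp [Finsupp.degree_eq_sum]
  have h2 : degPart (srIdeal K n Γ) k = AddMonoidAlgebra.supported K K
      (((Finset.finsuppAntidiag Finset.univ k).filter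
        fun u : Fin n →₀ ℕ => faceSupport u ∉ Γ : Finset _) : Set (Fin n →₀ ℕ)) := by
    ext f
    rw [degPart, Submodule.mem_inf, h1, Submodule.restrictScalars_mem, mem_srIdeal hΓ,
      AddMonoidAlgebra.mem_supported, AddMonoidAlgebra.mem_supported, Finset.coe_subset,
      Finset.coe_subset]
    constructor
    · intro h u hu
      exact Finset.mem_filter.2 ⟨h.2 hu, h.1 u hu⟩
    · intro h
      exact ⟨fun u hu => (Finset.mem_filter.1 (h hu)).2, fun u hu => (Finset.mem_filter.1 (h hu)).1⟩
  have h := hilb_add_finrank_degPart (srIdeal K n Γ) k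
  rw [h1, h2, finrank_supported, finrank_supported] at h
  have := Finset.card_filter_add_card_filter_not (s := Finset.finsuppAntidiag Finset.univ k)
    (fun u : Fin n →₀ ℕ => faceSupport u ∈ Γ)
  omega

end StanleyReisner

section GeneratingFunctions

open PowerSeries

variable {K : Type*} [Field K] {n : ℕ}

open Classical in
/-- The faces of `Γ` contained in `[n]`, as a finite set. -/
noncomputable def faceFinset (n : ℕ) (Γ : Set (Finset ℕ)) : Finset (Finset ℕ) :=
  (Finset.Icc 1 n).powerset.filter (· ∈ Γ)

lemma mem_faceFinset {Γ : Set (Finset ℕ)} {F : Finset ℕ} :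
    F ∈ faceFinset n Γ ↔ F ⊆ Finset.Icc 1 n ∧ F ∈ Γ := by
  simp [faceFinset]

lemma card_filter_succ_mem {F : Finset ℕ} (hF : F ⊆ Finset.Icc 1 n) :
    (Finset.univ.filter fun a : Fin n => (a : ℕ) + 1 ∈ F).card = F.card := by
  refine Finset.card_bij (fun a _ => (a : ℕ) + 1) (by simp) ?_ ?_
  · intro a _ b _ h
    exact Fin.ext (by simpa using h)
  · intro v hv
    obtain ⟨a, rfl⟩ := exists_fin_of_mem_Icc (hF hv)
    exact ⟨a, by simpa using hv, rfl⟩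

lemma faceSupport_eq_iff {F : Finset ℕ} (hF : F ⊆ Finset.Icc 1 n) (u : Fin n →₀ ℕ) :
    faceSupport u = F ↔ u.support = Finset.univ.filter fun a : Fin n => (a : ℕ) + 1 ∈ F := by
  constructor
  · rintro rfl
    ext a
    simp [succ_mem_faceSupport]
  · intro h
    ext v
    constructor
    · intro hv
      obtain ⟨a, rfl⟩ := exists_fin_of_mem_Icc (faceSupport_subset u hv)
      have : a ∈ u.support := Finsupp.mem_support_iff.2 (succ_mem_faceSupport.1 hv)
      rw [h] at this
      simpa using this
    · intro hv
      obtain ⟨a, rfl⟩ := exists_fin_of_mem_Icc (hF hv)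
      have : a ∈ u.support := by
        rw [h]
        simpa using hv
      exact succ_mem_faceSupport.2 (Finsupp.mem_support_iff.1 this)

lemma coeff_X_mul_mk_one (m : ℕ) :
    coeff m (X * mk 1 : ℤ⟦X⟧) = if m ≠ 0 then 1 else 0 := by
  cases m with
  | zero => simp
  | succ m => simp [coeff_succ_X_mul]

lemma card_filter_faceSupport_eq {F : Finset ℕ} (hF : F ⊆ Finset.Icc 1 n) (k : ℕ) :
    (((Finset.finsuppAntidiag Finset.univ k).filter
      fun u : Fin n →₀ ℕ => faceSupport u = F).card : ℤ) =
      coeff k ((X * mk 1 : ℤ⟦X⟧) ^ F.card) := by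
  classical
  rw [← card_filter_succ_mem hF, ← Finset.prod_const, coeff_prod]
  simp only [coeff_X_mul_mk_one, Finset.prod_boole]
  refine Eq.trans ?_ (@Finset.natCast_card_filter _ _ _ _ (_) _)
  congr 2
  ext u
  refine Finset.mem_filter.trans (Iff.trans ?_ (@Finset.mem_filter _ _ (_) _ _).symm)
  rw [faceSupport_eq_iff hF]
  simp only [Finset.mem_finsuppAntidiag, Finset.subset_univ, and_true]
  constructor
  · rintro ⟨h1, h2⟩
    refine ⟨⟨?_, h2.le⟩, fun i hi => ?_⟩
    · rw [← h1, ← h2]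
      exact Finset.sum_subset (Finset.subset_univ _) (by simp)
    · rw [← h2] at hi
      exact Finsupp.mem_support_iff.1 hi
  · rintro ⟨⟨h1, h2⟩, h3⟩
    refine ⟨?_, le_antisymm h2 fun i hi => Finsupp.mem_support_iff.2 (h3 i hi)⟩
    rw [← h1]
    refine (Finset.sum_subset (Finset.subset_univ _) fun i _ hi => ?_).symm
    exact Finsupp.notMem_support_iff.1 fun h => hi (h2 h)

lemma hilb_srIdeal {Γ : Set (Finset ℕ)} (hΓ : IsDownClosed Γ) (k : ℕ) :
    (hilb (srIdeal K n Γ) k : ℤ) =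
      ∑ F ∈ faceFinset n Γ, coeff k ((X * mk 1 : ℤ⟦X⟧) ^ F.card) := by
  classical
  rw [hilb_srIdeal_eq_card hΓ, Finset.card_eq_sum_card_fiberwise (f := faceSupport)
    (t := faceFinset n Γ), Nat.cast_sum]
  · refine Finset.sum_congr rfl fun F hF => ?_
    rw [mem_faceFinset] at hF
    rw [← card_filter_faceSupport_eq hF.1, Finset.filter_filter]
    congr 2
    refine Finset.filter_congr fun u _ => ⟨fun h => h.2, fun h => ⟨h ▸ hF.2, h⟩⟩
  · intro u hu
    have := (Finset.mem_filter.1 hu).2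
    exact mem_faceFinset.2 ⟨faceSupport_subset u, this⟩

/-- The generating function of a sequence. -/
noncomputable def genFun (f : ℕ → ℕ) : ℤ⟦X⟧ := mk fun k => (f k : ℤ)

lemma one_sub_X_mul_genFun_partialSum (f : ℕ → ℕ) :
    (1 - X) * genFun (partialSum f) = genFun f := by
  ext k
  rw [sub_mul, one_mul, map_sub]
  cases k with
  | zero => simp [genFun, partialSum_zero]
  | succ k =>
    rw [coeff_succ_X_mul]
    simp [genFun, partialSum_succ]

lemma one_sub_X_pow_mul_genFun_iterate (d : ℕ) (f : ℕ → ℕ) :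
    (1 - X) ^ d * genFun (partialSum^[d] f) = genFun f := by
  induction d generalizing f with
  | zero => simp
  | succ d ih =>
    rw [Function.iterate_succ_apply, pow_succ', mul_assoc, ih, one_sub_X_mul_genFun_partialSum]

lemma genFun_hilb_srIdeal {Γ : Set (Finset ℕ)} (hΓ : IsDownClosed Γ) :
    genFun (hilb (srIdeal K n Γ)) = ∑ F ∈ faceFinset n Γ, (X * mk 1 : ℤ⟦X⟧) ^ F.card := by
  ext k
  rw [genFun, coeff_mk, hilb_srIdeal hΓ, map_sum]

lemma coeff_one_sub_X_pow {e j : ℕ} (h : e ≤ j) :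
    coeff j ((1 - X : ℤ⟦X⟧) ^ e) = if j = e then (-1) ^ e else 0 := by
  induction e generalizing j with
  | zero => simp [coeff_one]
  | succ e ih =>
    obtain ⟨j, rfl⟩ : ∃ j', j = j' + 1 := ⟨j - 1, by omega⟩
    rw [pow_succ, mul_sub, mul_one, map_sub, coeff_succ_mul_X, ih (by omega), ih (by omega),
      if_neg (by omega)]
    by_cases hj : j = e
    · simp [hj, pow_succ]
    · simp [hj]

lemma NumReg.genFun_eq {Γ : Set (Finset ℕ)} (hΓ : IsDownClosed Γ) {d : ℕ}
    (hd : ∀ F ∈ Γ, F.card ≤ d) {l : List (MvPolynomial (Fin n) K)} (hl : l.length = d)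
    (h : NumReg (srIdeal K n Γ) l) :
    genFun (hilb (srIdeal K n Γ ⊔ Ideal.ofList l)) =
      ∑ F ∈ faceFinset n Γ, (X : ℤ⟦X⟧) ^ F.card * (1 - X) ^ (d - F.card) := by
  rw [← one_sub_X_pow_mul_genFun_iterate d, ← hl, ← h, genFun_hilb_srIdeal hΓ, hl, Finset.mul_sum]
  refine Finset.sum_congr rfl fun F hF => ?_
  have hF' := hd F (mem_faceFinset.1 hF).2
  obtain ⟨e, he⟩ := Nat.exists_eq_add_of_le' hF'
  have hX : (1 - X) * (X * mk 1 : ℤ⟦X⟧) = X := by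
    have := mk_one_mul_one_sub_eq_one ℤ
    linear_combination (X : ℤ⟦X⟧) * this
  rw [he, Nat.add_sub_cancel, pow_add, mul_assoc, ← mul_pow, hX, mul_comm]

lemma NumReg.hilb_eq_zero {Γ : Set (Finset ℕ)} (hΓ : IsDownClosed Γ) {d : ℕ}
    (hd : ∀ F ∈ Γ, F.card ≤ d) {l : List (MvPolynomial (Fin n) K)} (hl : l.length = d)
    (h : NumReg (srIdeal K n Γ) l) {k : ℕ} (hk : d < k) :
    hilb (srIdeal K n Γ ⊔ Ideal.ofList l) k = 0 := by
  have := congrArg (coeff k) (h.genFun_eq hΓ hd hl)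
  rw [genFun, coeff_mk, map_sum, Finset.sum_eq_zero] at this
  · exact_mod_cast this
  · intro F hF
    have := hd F (mem_faceFinset.1 hF).2
    rw [coeff_X_pow_mul', if_pos (by omega), coeff_one_sub_X_pow (by omega), if_neg (by omega)]

lemma hvec_self {Γ : Set (Finset ℕ)} (hsub : ∀ F ∈ Γ, F ⊆ Finset.Icc 1 n) {d : ℕ}
    (hd : ∀ F ∈ Γ, F.card ≤ d) :
    hvec d Γ d = ∑ F ∈ faceFinset n Γ, (-1 : ℤ) ^ (d - F.card) := by
  classical
  rw [hvec, ← Finset.sum_fiberwise_of_maps_to (s := faceFinset n Γ) (t := Finset.range (d + 1))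
    (g := Finset.card)]
  · refine Finset.sum_congr rfl fun j _ => ?_
    have h1 : fvec Γ j = ((faceFinset n Γ).filter fun F => F.card = j).card := by
      rw [fvec, ← Set.ncard_coe_finset]
      congr 1
      ext F
      simp only [Finset.coe_filter, mem_faceFinset, Set.mem_ofPred_eq]
      exact ⟨fun h => ⟨⟨hsub F h.1, h.1⟩, h.2⟩, fun h => ⟨h.1.2, h.2⟩⟩
    rw [Finset.sum_congr rfl (g := fun _ => (-1 : ℤ) ^ (d - j)), Finset.sum_const, h1]
    · simp [mul_comm]
    · intro F hF
      rw [(Finset.mem_filter.1 hF).2]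
  · intro F hF
    have := hd F (mem_faceFinset.1 hF).2
    simpa using by omega

lemma NumReg.hilb_eq_hvec {Γ : Set (Finset ℕ)} (hΓ : IsDownClosed Γ)
    (hsub : ∀ F ∈ Γ, F ⊆ Finset.Icc 1 n) {d : ℕ}
    (hd : ∀ F ∈ Γ, F.card ≤ d) {l : List (MvPolynomial (Fin n) K)} (hl : l.length = d)
    (h : NumReg (srIdeal K n Γ) l) :
    (hilb (srIdeal K n Γ ⊔ Ideal.ofList l) d : ℤ) = hvec d Γ d := by
  have := congrArg (coeff d) (h.genFun_eq hΓ hd hl)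
  rw [genFun, coeff_mk, map_sum] at this
  rw [this, hvec_self hsub hd]
  refine Finset.sum_congr rfl fun F hF => ?_
  have := hd F (mem_faceFinset.1 hF).2
  rw [coeff_X_pow_mul', if_pos (by omega), coeff_one_sub_X_pow le_rfl, if_pos rfl]

end GeneratingFunctions

section KrullDimension

open MvPolynomial

lemma ringKrullDim_quotient_le_of_forall {R : Type*} [CommRing R] (I : Ideal R) (d : WithBot ℕ∞)
    (h : ∀ p : PrimeSpectrum R, I ≤ p.asIdeal →
      ∃ P : Ideal R, P ≤ p.asIdeal ∧ ringKrullDim (R ⧸ P) ≤ d) :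
    ringKrullDim (R ⧸ I) ≤ d := by
  rw [ringKrullDim_quotient, Order.krullDim_eq_iSup_coheight]
  refine iSup_le fun p => ?_
  obtain ⟨P, hP, hd⟩ := h p.1 p.2
  rw [Order.coheight_eq_krullDim_Ici]
  refine le_trans ?_ hd
  rw [ringKrullDim_quotient]
  exact Order.krullDim_le_of_strictMono
    (fun q : Set.Ici p => (⟨q.1.1, fun x hx => q.2 (hP hx)⟩ : PrimeSpectrum.zeroLocus (P : Set R)))
    fun q r h => h

variable {K : Type*} [Field K] {n : ℕ}

/-- The projection of the polynomial ring onto the variables satisfying `p`. -/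
noncomputable def killCompl' (K : Type*) [Field K] {n : ℕ} (p : Fin n → Prop) [DecidablePred p] :
    MvPolynomial (Fin n) K →ₐ[K] MvPolynomial {a : Fin n // p a} K :=
  aeval fun a => if h : p a then X ⟨a, h⟩ else 0

lemma killCompl'_rename (p : Fin n → Prop) [DecidablePred p]
    (f : MvPolynomial {a : Fin n // p a} K) :
    killCompl' K p (rename Subtype.val f) = f := by
  have : (killCompl' K p).comp (rename Subtype.val) = AlgHom.id K _ := by
    ext a
    simp [killCompl', a.2]
  exact DFunLike.congr_fun this f

lemma killCompl'_surjective (p : Fin n → Prop) [DecidablePred p] :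
    Function.Surjective (killCompl' K p) := fun f => ⟨_, killCompl'_rename p f⟩

lemma sub_rename_killCompl'_mem (p : Fin n → Prop) [DecidablePred p]
    (f : MvPolynomial (Fin n) K) :
    f - rename Subtype.val (killCompl' K p f) ∈ Ideal.span (X '' {a : Fin n | ¬ p a}) := by
  induction f using MvPolynomial.induction_on with
  | C c => simp
  | add f g hf hg =>
    rw [map_add, map_add, add_sub_add_comm]
    exact add_mem hf hg
  | mul_X f a hf =>
    rw [map_mul, map_mul]
    by_cases h : p a
    · have : rename Subtype.val (killCompl' K p (X a : MvPolynomial (Fin n) K)) = X a := by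
        simp [killCompl', h]
      rw [this, ← sub_mul]
      exact Ideal.mul_mem_right _ _ hf
    · have : killCompl' K p (X a : MvPolynomial (Fin n) K) = 0 := by
        simp [killCompl', h]
      rw [this, map_zero, mul_zero, sub_zero]
      exact Ideal.mul_mem_left _ _ (Ideal.subset_span ⟨a, h, rfl⟩)

lemma ringKrullDim_mvPolynomial_subtype (p : Fin n → Prop) [DecidablePred p] :
    ringKrullDim (MvPolynomial {a : Fin n // p a} K) = (Finset.univ.filter p).card := by
  rw [MvPolynomial.ringKrullDim_of_isNoetherianRing, ringKrullDim_eq_zero_of_field, zero_add,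
    Nat.card_eq_fintype_card, Fintype.card_subtype]

lemma ringKrullDim_quotient_srIdeal {Γ : Set (Finset ℕ)} (hΓ : IsDownClosed Γ) {d : ℕ}
    (hd : ∀ F ∈ Γ, F.card ≤ d) {F : Finset ℕ} (hF : F ⊆ Finset.Icc 1 n) (hFΓ : F ∈ Γ)
    (hFd : F.card = d) :
    ringKrullDim (MvPolynomial (Fin n) K ⧸ srIdeal K n Γ) = d := by
  classical
  apply le_antisymm
  · refine ringKrullDim_quotient_le_of_forall _ _ fun p hp => ?_
    set G : Finset ℕ := (Finset.univ.filter fun a : Fin n =>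
      (X a : MvPolynomial (Fin n) K) ∉ p.asIdeal).image fun a : Fin n => (a : ℕ) + 1 with hG
    have hmem : ∀ a : Fin n, (a : ℕ) + 1 ∈ G ↔ (X a : MvPolynomial (Fin n) K) ∉ p.asIdeal := by
      intro a
      simp [hG, Fin.val_inj]
    have hGn : G ⊆ Finset.Icc 1 n := by
      intro v hv
      obtain ⟨a, -, rfl⟩ := Finset.mem_image.1 hv
      have := a.isLt
      simp only [Finset.mem_Icc]
      omega
    have hGΓ : G ∈ Γ := by
      by_contra hcon
      have h1 : faceMonomial K n G ∈ p.asIdeal := hp (Ideal.subset_span ⟨G, hGn, hcon, rfl⟩)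
      rw [faceMonomial] at h1
      obtain ⟨a, ha, hap⟩ := (p.2.prod_mem_iff).1 h1
      exact (hmem a).1 (Finset.mem_filter.1 ha).2 hap
    refine ⟨Ideal.span (X '' {a : Fin n | ¬ ((a : ℕ) + 1 ∈ G)}), ?_, ?_⟩
    · rw [Ideal.span_le]
      rintro _ ⟨a, ha, rfl⟩
      by_contra hcon
      exact ha ((hmem a).2 hcon)
    · refine (ringKrullDim_le_of_surjective
        ((Ideal.Quotient.mk (Ideal.span (X '' {a : Fin n | ¬ ((a : ℕ) + 1 ∈ G)}))).comp
          (rename (R := K) (Subtype.val : {a : Fin n // (a : ℕ) + 1 ∈ G} → Fin n)).toRingHom)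
        ?_).trans ?_
      · intro x
        obtain ⟨f, rfl⟩ := Ideal.Quotient.mk_surjective x
        refine ⟨killCompl' K _ f, ?_⟩
        exact (Ideal.Quotient.eq.2 (sub_rename_killCompl'_mem _ f)).symm
      · rw [ringKrullDim_mvPolynomial_subtype, card_filter_succ_mem hGn]
        exact_mod_cast hd G hGΓ
  · rw [← hFd, ← card_filter_succ_mem hF, ← ringKrullDim_mvPolynomial_subtype (K := K)]
    refine ringKrullDim_le_of_surjective (Ideal.Quotient.lift (srIdeal K n Γ)
      (killCompl' K fun a : Fin n => (a : ℕ) + 1 ∈ F).toRingHom ?_)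
      (Ideal.Quotient.lift_surjective_of_surjective _ _ (killCompl'_surjective _))
    suffices h : srIdeal K n Γ ≤
        RingHom.ker (killCompl' K fun a : Fin n => (a : ℕ) + 1 ∈ F).toRingHom from fun f hf => h hf
    rw [srIdeal, Ideal.span_le]
    rintro _ ⟨G, hG, hGΓ, rfl⟩
    have : ¬ G ⊆ F := fun h => hGΓ (hΓ F hFΓ G h)
    obtain ⟨v, hvG, hvF⟩ := Finset.not_subset.1 this
    obtain ⟨a, rfl⟩ := exists_fin_of_mem_Icc (hG hvG)
    rw [SetLike.mem_coe, RingHom.mem_ker, faceMonomial, map_prod]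
    refine Finset.prod_eq_zero (i := a) (by simpa using hvG) ?_
    simp [killCompl', hvF]

lemma ringKrullDim_quotient_le_zero {J : Ideal (MvPolynomial (Fin n) K)} {N : ℕ}
    (h : hilb J N = 0) : ringKrullDim (MvPolynomial (Fin n) K ⧸ J) ≤ 0 := by
  classical
  refine ringKrullDim_quotient_le_of_forall _ _ fun p hp => ?_
  have hX : ∀ a : Fin n, (X a : MvPolynomial (Fin n) K) ∈ p.asIdeal := by
    intro a
    refine p.2.mem_of_pow_mem N (hp (hilb_eq_zero_iff.1 h _ ?_))
    simpa using (isHomogeneous_X K a).pow N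
  refine ⟨Ideal.span (X '' {a : Fin n | ¬ False}), ?_, ?_⟩
  · rw [Ideal.span_le]
    rintro _ ⟨a, -, rfl⟩
    exact hX a
  · refine (ringKrullDim_le_of_surjective
      ((Ideal.Quotient.mk (Ideal.span (X '' {a : Fin n | ¬ False}))).comp
        (rename (R := K) (Subtype.val : {a : Fin n // False} → Fin n)).toRingHom) ?_).trans ?_
    · intro x
      obtain ⟨f, rfl⟩ := Ideal.Quotient.mk_surjective x
      refine ⟨killCompl' K _ f, ?_⟩
      exact (Ideal.Quotient.eq.2 (sub_rename_killCompl'_mem _ f)).symm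
    · rw [ringKrullDim_mvPolynomial_subtype]
      simp

lemma sdim_spec {Γ : Set (Finset ℕ)} (hsub : ∀ F ∈ Γ, F ⊆ Finset.Icc 1 n) (hne : Γ.Nonempty)
    {d : ℕ} (h : sdim Γ = (d : ℤ) - 1) :
    (∀ F ∈ Γ, F.card ≤ d) ∧ ∃ F ∈ Γ, F.card = d := by
  have hfin : Γ.Finite := (Finset.finite_toSet (Finset.Icc 1 n).powerset).subset fun F hF =>
    Finset.mem_coe.2 (Finset.mem_powerset.2 (hsub F hF))
  have hfin' := hfin.image fun F : Finset ℕ => (F.card : ℤ) - 1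
  constructor
  · intro F hF
    have := le_csSup hfin'.bddAbove (Set.mem_image_of_mem _ hF)
    rw [← sdim, h] at this
    omega
  · obtain ⟨F, hF, hFd⟩ := Set.Nonempty.csSup_mem (hne.image _) hfin'
    rw [← sdim, h] at hFd
    exact ⟨F, hF, by simp only at hFd; omega⟩

end KrullDimension

section StrongLefschetz

open MvPolynomial

variable {K : Type*} [Field K] {n : ℕ}

instance finite_quotPiece (I : Ideal (MvPolynomial (Fin n) K)) (k : ℕ) :
    Module.Finite K (quotPiece I k) := by
  unfold quotPiece
  infer_instance

lemma quotPiece_eq_bot_iff {I : Ideal (MvPolynomial (Fin n) K)} {k : ℕ} :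
    quotPiece I k = ⊥ ↔ hilb I k = 0 := Submodule.finrank_eq_zero.symm

/-- Multiplication by `ω ^ e` between graded pieces of a graded quotient. -/
noncomputable def pieceMul (J : Ideal (MvPolynomial (Fin n) K)) {ω : MvPolynomial (Fin n) K}
    (hω : ω.IsHomogeneous 1) {a e b : ℕ} (hb : a + e = b) : quotPiece J a →ₗ[K] quotPiece J b :=
  (LinearMap.mulLeft K (Ideal.Quotient.mk J ω ^ e)).restrict <| by
    rintro _ ⟨f, hf, rfl⟩
    have hf' : f.IsHomogeneous a := hf
    refine ⟨ω ^ e * f, ?_, by simp⟩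
    have := (hω.pow e).mul hf'
    rw [show 1 * e + a = b by omega] at this
    exact this

lemma bijOn_quotPiece_iff {J : Ideal (MvPolynomial (Fin n) K)} (hJ : IsHomIdeal J)
    {ω : MvPolynomial (Fin n) K} (hω : ω.IsHomogeneous 1) {a e b : ℕ} (hb : a + e = b) :
    Set.BijOn (fun x => Ideal.Quotient.mk J ω ^ e * x) (quotPiece J a) (quotPiece J b) ↔
      hilb J a = hilb J b ∧ hilb (J ⊔ Ideal.span {ω ^ e}) b = 0 := by
  have hsurj : Function.Surjective (pieceMul J hω hb) ↔
      hilb (J ⊔ Ideal.span {ω ^ e}) b = 0 := by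
    rw [hilb_eq_zero_iff]
    constructor
    · intro h f hf
      obtain ⟨⟨_, g, hg, rfl⟩, hgf⟩ := h ⟨Ideal.Quotient.mk J f, f, hf, rfl⟩
      have h1 : Ideal.Quotient.mk J (ω ^ e * g) = Ideal.Quotient.mk J f := by
        have := congrArg Subtype.val hgf
        rw [map_mul, map_pow]
        exact this
      rw [Ideal.Quotient.eq] at h1
      have h2 : ω ^ e * g ∈ J ⊔ Ideal.span {ω ^ e} :=
        Ideal.mem_sup_right (Ideal.mul_mem_right _ _ (Ideal.mem_span_singleton_self _))
      have := sub_mem h2 (Ideal.mem_sup_left h1)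
      rwa [sub_sub_cancel] at this
    · rintro h ⟨_, f, hf, rfl⟩
      obtain ⟨j, hj, g, hg, hfg⟩ := Submodule.mem_sup.1 (h f hf)
      obtain ⟨g, rfl⟩ := Ideal.mem_span_singleton'.1 hg
      refine ⟨⟨_, homogeneousComponent a g, homogeneousComponent_isHomogeneous _ _, rfl⟩, ?_⟩
      apply Subtype.ext
      have h1 : homogeneousComponent b j + homogeneousComponent a g * ω ^ e = f := by
        have h2 := congrArg (homogeneousComponent b) hfg
        rw [map_add, homogeneousComponent_mul_of_isHomogeneous (hω.pow e), if_pos (by omega),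
          show b - 1 * e = a by omega, homogeneousComponent_eq_self hf] at h2
        exact h2
      change Ideal.Quotient.mk J ω ^ e * Ideal.Quotient.mk J (homogeneousComponent a g) =
        Ideal.Quotient.mk J f
      rw [← map_pow, ← map_mul, Ideal.Quotient.eq]
      have h3 := hJ j hj b
      rw [← h1]
      convert neg_mem h3 using 1
      ring
  constructor
  · intro h
    have hs : Function.Surjective (pieceMul J hω hb) := by
      rintro ⟨y, hy⟩
      obtain ⟨x, hx, hxy⟩ := h.surjOn hy
      exact ⟨⟨x, hx⟩, Subtype.ext hxy⟩
    have hi : Function.Injective (pieceMul J hω hb) := by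
      rintro ⟨x, hx⟩ ⟨y, hy⟩ hxy
      exact Subtype.ext (h.injOn hx hy (congrArg Subtype.val hxy))
    exact ⟨(LinearEquiv.ofBijective _ ⟨hi, hs⟩).finrank_eq, hsurj.1 hs⟩
  · rintro ⟨h1, h2⟩
    have hs := hsurj.2 h2
    have hi := (LinearMap.injective_iff_surjective_of_finrank_eq_finrank h1).2 hs
    refine ⟨fun x hx => ((pieceMul J hω hb) ⟨x, hx⟩).2, fun x hx y hy hxy => ?_, fun y hy => ?_⟩
    · exact congrArg Subtype.val (@hi ⟨x, hx⟩ ⟨y, hy⟩ (Subtype.ext hxy))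
    · obtain ⟨⟨x, hx⟩, hxy⟩ := hs ⟨y, hy⟩
      exact ⟨x, hx, congrArg Subtype.val hxy⟩

/-- The sequence `l` of linear forms is regular on `S / I`, and multiplication by powers of the
linear form `ω` on the Artinian quotient `S / (I + (l))` has the strong Lefschetz property, with
socle degree `s`; all of this is expressed by Hilbert functions. -/
structure IsLefschetz (I : Ideal (MvPolynomial (Fin n) K)) (l : List (MvPolynomial (Fin n) K))
    (ω : MvPolynomial (Fin n) K) (s : ℕ) : Prop where
  hom : ∀ x ∈ l, x.IsHomogeneous 1
  hom_elem : ω.IsHomogeneous 1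
  numReg : NumReg I l
  hilb_ne_zero : hilb (I ⊔ Ideal.ofList l) s ≠ 0
  hilb_eq_zero : ∀ k, s < k → hilb (I ⊔ Ideal.ofList l) k = 0
  hilb_symm : ∀ k, 2 * k ≤ s → hilb (I ⊔ Ideal.ofList l) k = hilb (I ⊔ Ideal.ofList l) (s - k)
  lefschetz : ∀ k, 2 * k ≤ s →
    hilb (I ⊔ Ideal.ofList l ⊔ Ideal.span {ω ^ (s - 2 * k)}) (s - k) = 0

lemma ComplexSLP.exists_isLefschetz [Infinite K] {Γ : Set (Finset ℕ)} (hΓ : IsDownClosed Γ)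
    (hsub : ∀ F ∈ Γ, F ⊆ Finset.Icc 1 n) {d : ℕ} (hd : ∀ F ∈ Γ, F.card ≤ d)
    (hd' : ∃ F ∈ Γ, F.card = d) (h : ComplexSLP K n d Γ) :
    ∃ l ω, l.length = d ∧ IsLefschetz (srIdeal K n Γ) l ω d := by
  obtain ⟨F, hF, hFd⟩ := hd'
  have hdim := ringKrullDim_quotient_srIdeal (K := K) hΓ hd (hsub F hF) hF hFd
  obtain ⟨hpos, ⟨d₀, hd₀, θ₀, hθ₀, hreg⟩, d₁, hd₁, θ, hθ, ω, hω, s, ⟨hs, hs'⟩, hbij⟩ := h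
  obtain rfl : d₀ = d := by
    rw [hdim] at hd₀
    exact_mod_cast hd₀.symm
  obtain rfl : d₁ = d₀ := by
    rw [hdim] at hd₁
    exact_mod_cast hd₁.symm
  have hI := isHomIdeal_srIdeal (K := K) (n := n) Γ
  have hl₀ : ∀ x ∈ List.ofFn θ₀, x.IsHomogeneous 1 := by
    intro x hx
    obtain ⟨a, rfl⟩ := (List.mem_ofFn' _ _).1 hx
    exact hθ₀.1 a
  have hl : ∀ x ∈ List.ofFn θ, x.IsHomogeneous 1 := by
    intro x hx
    obtain ⟨a, rfl⟩ := (List.mem_ofFn' _ _).1 hx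
    exact hθ.1 a
  have hr₀ := (isWeaklyRegular_iff_numReg hI hl₀).1 hreg.toIsWeaklyRegular
  rw [← ofList_ofFn] at hs hs'
  have hr : NumReg (srIdeal K n Γ) (List.ofFn θ) := by
    refine NumReg.of_hilb_eq_zero hI hl₀ hl (by simp) hr₀
      (hr₀.hilb_eq_zero hΓ hd (by simp) (Nat.lt_succ_self d₁))
      (quotPiece_eq_bot_iff.1 (hs' (s + 1) (Nat.lt_succ_self s)))
  have hz : ∀ k, d₁ < k → hilb (srIdeal K n Γ ⊔ Ideal.ofList (List.ofFn θ)) k = 0 :=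
    fun k hk => hr.hilb_eq_zero hΓ hd (by simp) hk
  have hne : hilb (srIdeal K n Γ ⊔ Ideal.ofList (List.ofFn θ)) d₁ ≠ 0 := by
    have := hr.hilb_eq_hvec hΓ hsub hd (by simp)
    omega
  obtain rfl : s = d₁ := by
    apply le_antisymm
    · by_contra hcon
      exact hs (quotPiece_eq_bot_iff.2 (hz s (not_le.1 hcon)))
    · by_contra hcon
      exact hne (quotPiece_eq_bot_iff.1 (hs' _ (not_le.1 hcon)))
  have hJ : IsHomIdeal (srIdeal K n Γ ⊔ Ideal.ofList (List.ofFn θ)) :=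
    hI.sup (isHomIdeal_ofList hl)
  have hbij' : ∀ k, 2 * k ≤ s → hilb (srIdeal K n Γ ⊔ Ideal.ofList (List.ofFn θ)) k =
      hilb (srIdeal K n Γ ⊔ Ideal.ofList (List.ofFn θ)) (s - k) ∧
      hilb (srIdeal K n Γ ⊔ Ideal.ofList (List.ofFn θ) ⊔ Ideal.span {ω ^ (s - 2 * k)}) (s - k) =
        0 := by
    rw [ofList_ofFn] at hJ ⊢
    exact fun k hk => (bijOn_quotPiece_iff hJ hω (by omega)).1 (hbij k hk)
  exact ⟨List.ofFn θ, ω, by simp, hl, hω, hr, hne, hz, fun k hk => (hbij' k hk).1,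
    fun k hk => (hbij' k hk).2⟩

lemma IsLefschetz.complexSLP {Γ : Set (Finset ℕ)} (hΓ : IsDownClosed Γ)
    (hsub : ∀ F ∈ Γ, F ⊆ Finset.Icc 1 n) {d : ℕ} (hd : ∀ F ∈ Γ, F.card ≤ d)
    (hd' : ∃ F ∈ Γ, F.card = d) {l : List (MvPolynomial (Fin n) K)} {ω : MvPolynomial (Fin n) K}
    (hlen : l.length = d) (h : IsLefschetz (srIdeal K n Γ) l ω d) : ComplexSLP K n d Γ := by
  obtain ⟨F, hF, hFd⟩ := hd'
  have hdim := ringKrullDim_quotient_srIdeal (K := K) hΓ hd (hsub F hF) hF hFd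
  have hI := isHomIdeal_srIdeal (K := K) (n := n) Γ
  have hJ : IsHomIdeal (srIdeal K n Γ ⊔ Ideal.ofList l) := hI.sup (isHomIdeal_ofList h.hom)
  obtain ⟨θ, rfl⟩ : ∃ θ : Fin d → MvPolynomial (Fin n) K, l = List.ofFn θ := by
    subst hlen
    exact ⟨l.get, (List.ofFn_get l).symm⟩
  have hlsop : IsLSOP (srIdeal K n Γ) d θ := by
    refine ⟨fun a => h.hom _ ((List.mem_ofFn' _ _).2 ⟨a, rfl⟩), ?_⟩
    rw [← ofList_ofFn]
    exact ringKrullDim_quotient_le_zero (h.hilb_eq_zero (d + 1) (Nat.lt_succ_self d))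
  refine ⟨?_, ⟨d, hdim, θ, hlsop, h.numReg.isRegular hI h.hom h.hilb_ne_zero⟩, d, hdim, θ, hlsop,
    ω, h.hom_elem, d, ?_, ?_⟩
  · rw [← h.numReg.hilb_eq_hvec hΓ hsub hd hlen]
    exact_mod_cast Nat.pos_of_ne_zero h.hilb_ne_zero
  · rw [← ofList_ofFn]
    exact ⟨fun hbot => h.hilb_ne_zero (quotPiece_eq_bot_iff.1 hbot),
      fun k hk => quotPiece_eq_bot_iff.2 (h.hilb_eq_zero k hk)⟩
  · have h1 := h.hilb_symm
    have h2 := h.lefschetz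
    rw [ofList_ofFn] at hJ h1 h2
    exact fun k hk => (bijOn_quotPiece_iff hJ h.hom_elem (by omega)).2 ⟨h1 k hk, h2 k hk⟩

end StrongLefschetz

section GenericLefschetz

open MvPolynomial

variable {K : Type*} [Field K] {n : ℕ}

lemma NumReg.hilb_eq {I : Ideal (MvPolynomial (Fin n) K)} {l l' : List (MvPolynomial (Fin n) K)}
    (h : NumReg I l) (h' : NumReg I l') (hlen : l.length = l'.length) :
    hilb (I ⊔ Ideal.ofList l) = hilb (I ⊔ Ideal.ofList l') := by
  have h1 := h.symm.trans h'
  rw [hlen] at h1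
  exact partialSum_injective.iterate _ h1

lemma NumReg.congr {I : Ideal (MvPolynomial (Fin n) K)} {l l' : List (MvPolynomial (Fin n) K)}
    (h : NumReg I l) (hlen : l.length = l'.length) (hl : Ideal.ofList l = Ideal.ofList l') :
    NumReg I l' := by
  rw [NumReg, ← hl, ← hlen]
  exact h

lemma IsLefschetz.congr {I : Ideal (MvPolynomial (Fin n) K)}
    {l l' : List (MvPolynomial (Fin n) K)} {ω ω' : MvPolynomial (Fin n) K} {s : ℕ}
    (h : IsLefschetz I l ω s) (hlen : l.length = l'.length)
    (hl : Ideal.ofList l = Ideal.ofList l') (hω : Ideal.span {ω} = Ideal.span {ω'})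
    (hom : ∀ x ∈ l', x.IsHomogeneous 1) (hom_elem : ω'.IsHomogeneous 1) :
    IsLefschetz I l' ω' s where
  hom := hom
  hom_elem := hom_elem
  numReg := h.numReg.congr hlen hl
  hilb_ne_zero := hl ▸ h.hilb_ne_zero
  hilb_eq_zero := hl ▸ h.hilb_eq_zero
  hilb_symm := hl ▸ h.hilb_symm
  lefschetz := by
    intro k hk
    rw [← hl, ← Ideal.span_singleton_pow, ← hω, Ideal.span_singleton_pow]
    exact h.lefschetz k hk

lemma IsHomFamily.pencil {a b : MvPolynomial (Fin n) K} {e : ℕ} (ha : a.IsHomogeneous e)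
    (hb : b.IsHomogeneous e) :
    IsHomFamily e (Polynomial.C a + Polynomial.X * Polynomial.C b) :=
  (IsHomFamily.const ha).add (IsHomFamily.const hb).X_mul

lemma mem_ofFn_isHomogeneous {d : ℕ} {θ : Fin d → MvPolynomial (Fin n) K}
    (h : ∀ a, (θ a).IsHomogeneous 1) : ∀ x ∈ List.ofFn θ, x.IsHomogeneous 1 := by
  intro x hx
  obtain ⟨a, rfl⟩ := (List.mem_ofFn' _ _).1 hx
  exact h a

lemma isHomogeneous_of_forall_mem_ofFn {d : ℕ} {θ : Fin d → MvPolynomial (Fin n) K}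
    (h : ∀ x ∈ List.ofFn θ, x.IsHomogeneous 1) (a : Fin d) : (θ a).IsHomogeneous 1 :=
  h _ ((List.mem_ofFn' _ _).2 ⟨a, rfl⟩)

lemma isHomogeneous_add_C_mul {a b : MvPolynomial (Fin n) K} (ha : a.IsHomogeneous 1)
    (hb : b.IsHomogeneous 1) (t : K) : (a + C t * b).IsHomogeneous 1 :=
  ha.add (hb.C_mul t)

/-- The strong Lefschetz property is an open condition along a pencil. -/
lemma IsLefschetz.exists_finite_pencil [Infinite K] {I : Ideal (MvPolynomial (Fin n) K)}
    (hI : IsHomIdeal I) {d : ℕ} {θ θ' : Fin d → MvPolynomial (Fin n) K}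
    {ω ω' : MvPolynomial (Fin n) K} {s : ℕ} (h : IsLefschetz I (List.ofFn θ) ω s)
    (hθ' : ∀ a, (θ' a).IsHomogeneous 1) (hω' : ω'.IsHomogeneous 1) :
    ∃ B : Set K, B.Finite ∧ ∀ t ∉ B,
      IsLefschetz I (List.ofFn fun a => θ a + C t * θ' a) (ω + C t * ω') s := by
  have hθ := isHomogeneous_of_forall_mem_ofFn h.hom
  set 𝒬 : Set (Polynomial (MvPolynomial (Fin n) K)) :=
    Set.range fun a => Polynomial.C (θ a) + Polynomial.X * Polynomial.C (θ' a) with h𝒬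
  have h𝒬' : ∀ Q ∈ 𝒬, ∃ e, IsHomFamily e Q := by
    rintro _ ⟨a, rfl⟩
    exact ⟨1, IsHomFamily.pencil (hθ a) (hθ' a)⟩
  have hfam : ∀ t, familyIdeal 𝒬 t = Ideal.ofList (List.ofFn fun a => θ a + C t * θ' a) := by
    intro t
    rw [familyIdeal, h𝒬, ← Set.range_comp, ofList_ofFn]
    simp only [Function.comp_def, Polynomial.eval_add, Polynomial.eval_mul, Polynomial.eval_C,
      Polynomial.eval_X]
  have hfam₀ : familyIdeal 𝒬 0 = Ideal.ofList (List.ofFn θ) := by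
    rw [hfam]
    simp
  obtain ⟨B, hB, hBt⟩ := exists_finite_hilb_sup_le hI h𝒬' (s + 1)
  have hk : ∀ k : ℕ, ∃ B : Set K, B.Finite ∧ ∀ t ∉ B, 2 * k ≤ s →
      hilb (I ⊔ Ideal.ofList (List.ofFn fun a => θ a + C t * θ' a) ⊔
        Ideal.span {(ω + C t * ω') ^ (s - 2 * k)}) (s - k) = 0 := by
    intro k
    obtain ⟨B, hB, hBt⟩ := exists_finite_hilb_sup_le hI
      (𝒬 := 𝒬 ∪ {(Polynomial.C ω + Polynomial.X * Polynomial.C ω') ^ (s - 2 * k)}) (by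
        rintro _ (hQ | rfl)
        · exact h𝒬' _ hQ
        · exact ⟨_, (IsHomFamily.pencil h.hom_elem hω').pow _⟩) (s - k)
    refine ⟨B, hB, fun t ht hk => ?_⟩
    have h1 := hBt t ht
    simp only [familyIdeal_union, familyIdeal_singleton, hfam₀, hfam t, Polynomial.eval_pow,
      Polynomial.eval_add, Polynomial.eval_mul, Polynomial.eval_C, Polynomial.eval_X, map_zero,
      zero_mul, add_zero, ← sup_assoc] at h1
    rw [h.lefschetz k hk] at h1
    exact Nat.le_zero.1 h1
  choose B' hB' hB't using hk
  refine ⟨B ∪ ⋃ k ∈ Finset.range (s + 1), B' k,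
    hB.union (Set.Finite.biUnion (Finset.finite_toSet _) fun k _ => hB' k), fun t ht => ?_⟩
  simp only [Set.mem_union, Set.mem_iUnion, not_or, not_exists, Finset.mem_range] at ht
  have hz : hilb (I ⊔ Ideal.ofList (List.ofFn fun a => θ a + C t * θ' a)) (s + 1) = 0 := by
    have h1 := hBt t ht.1
    rw [hfam, hfam₀, h.hilb_eq_zero _ (Nat.lt_succ_self s)] at h1
    exact Nat.le_zero.1 h1
  have hhom : ∀ x ∈ List.ofFn fun a => θ a + C t * θ' a, x.IsHomogeneous 1 :=
    mem_ofFn_isHomogeneous fun a => isHomogeneous_add_C_mul (hθ a) (hθ' a) t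
  have hnum : NumReg I (List.ofFn fun a => θ a + C t * θ' a) :=
    h.numReg.of_hilb_eq_zero hI h.hom hhom (by simp)
      (h.hilb_eq_zero _ (Nat.lt_succ_self s)) hz
  have heq := hnum.hilb_eq h.numReg (by simp)
  refine ⟨hhom, isHomogeneous_add_C_mul h.hom_elem hω' t, hnum, ?_, ?_, ?_, fun k hk => ?_⟩
  · rw [heq]; exact h.hilb_ne_zero
  · rw [heq]; exact h.hilb_eq_zero
  · rw [heq]; exact h.hilb_symm
  · exact hB't k t (ht.2 k (by omega)) hk

lemma span_range_add_C_mul {ι : Type*} {θ θ' : ι → MvPolynomial (Fin n) K} {t : K} (ht : t ≠ 0) :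
    Ideal.span (Set.range fun a => θ a + C t * θ' a) =
      Ideal.span (Set.range fun a => θ' a + C t⁻¹ * θ a) := by
  rw [Ideal.span_range_eq_iSup, Ideal.span_range_eq_iSup]
  exact iSup_congr fun a => span_add_C_mul ht

/-- Two ideals with the strong Lefschetz property have common Lefschetz parameters. -/
lemma IsLefschetz.exists_common [Infinite K] {I₁ I₂ : Ideal (MvPolynomial (Fin n) K)}
    (hI₁ : IsHomIdeal I₁) (hI₂ : IsHomIdeal I₂) {d : ℕ}
    {l₁ l₂ : List (MvPolynomial (Fin n) K)} {ω₁ ω₂ : MvPolynomial (Fin n) K} {s₁ s₂ : ℕ}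
    (h₁ : IsLefschetz I₁ l₁ ω₁ s₁) (h₂ : IsLefschetz I₂ l₂ ω₂ s₂)
    (hl₁ : l₁.length = d) (hl₂ : l₂.length = d) :
    ∃ l ω, l.length = d ∧ IsLefschetz I₁ l ω s₁ ∧ IsLefschetz I₂ l ω s₂ := by
  obtain ⟨θ₁, rfl⟩ : ∃ θ : Fin d → MvPolynomial (Fin n) K, l₁ = List.ofFn θ := by
    subst hl₁
    exact ⟨l₁.get, (List.ofFn_get l₁).symm⟩
  obtain ⟨θ₂, rfl⟩ : ∃ θ : Fin d → MvPolynomial (Fin n) K, l₂ = List.ofFn θ := by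
    subst hl₂
    exact ⟨l₂.get, (List.ofFn_get l₂).symm⟩
  have hθ₁ := isHomogeneous_of_forall_mem_ofFn h₁.hom
  have hθ₂ := isHomogeneous_of_forall_mem_ofFn h₂.hom
  obtain ⟨B₁, hB₁, hB₁t⟩ := h₁.exists_finite_pencil hI₁ hθ₂ h₂.hom_elem
  obtain ⟨B₂, hB₂, hB₂t⟩ := h₂.exists_finite_pencil hI₂ hθ₁ h₁.hom_elem
  obtain ⟨t, ht⟩ := ((hB₁.union (hB₂.preimage inv_injective.injOn)).union
    (Set.finite_singleton (0 : K))).exists_notMem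
  simp only [Set.mem_union, Set.mem_preimage, Set.mem_singleton_iff, not_or] at ht
  obtain ⟨⟨ht₁, ht₂⟩, ht₀⟩ := ht
  refine ⟨_, _, by simp, hB₁t t ht₁, (hB₂t t⁻¹ ht₂).congr (by simp) ?_ ?_
    (hB₁t t ht₁).hom (hB₁t t ht₁).hom_elem⟩
  · rw [ofList_ofFn, ofList_ofFn, span_range_add_C_mul ht₀]
  · exact (span_add_C_mul ht₀).symm

end GenericLefschetz

section LinkIdeals

open MvPolynomial

variable {K : Type*} [Field K] {n : ℕ}

lemma srIdeal_anti {Γ Δ : Set (Finset ℕ)} (h : Γ ⊆ Δ) : srIdeal K n Δ ≤ srIdeal K n Γ := by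
  refine Ideal.span_mono ?_
  rintro _ ⟨F, h1, h2, rfl⟩
  exact ⟨F, h1, fun hF => h2 (h hF), rfl⟩

lemma faceMonomial_mem_srIdeal {Γ : Set (Finset ℕ)} {F : Finset ℕ} (hF : F ⊆ Finset.Icc 1 n)
    (h : F ∉ Γ) : faceMonomial K n F ∈ srIdeal K n Γ := Ideal.subset_span ⟨F, hF, h, rfl⟩

lemma faceMonomial_insert {F : Finset ℕ} {a : Fin n} (ha : (a : ℕ) + 1 ∉ F) :
    faceMonomial K n (insert ((a : ℕ) + 1) F) = X a * faceMonomial K n F := by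
  rw [faceMonomial, faceMonomial]
  have : (Finset.univ.filter fun b : Fin n => (b : ℕ) + 1 ∈ insert ((a : ℕ) + 1) F) =
      insert a (Finset.univ.filter fun b : Fin n => (b : ℕ) + 1 ∈ F) := by
    ext b
    simp [Fin.ext_iff]
  rw [this, Finset.prod_insert (by simpa using ha)]

lemma faceSupport_single_add (a : Fin n) (u : Fin n →₀ ℕ) :
    faceSupport (Finsupp.single a 1 + u) = insert ((a : ℕ) + 1) (faceSupport u) := by
  ext v
  constructor
  · intro hv
    obtain ⟨b, rfl⟩ := exists_fin_of_mem_Icc (faceSupport_subset _ hv)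
    rw [succ_mem_faceSupport, Finsupp.add_apply, Finsupp.single_apply] at hv
    rw [Finset.mem_insert, succ_mem_faceSupport]
    split_ifs at hv with h
    · left; rw [h]
    · right; simpa using hv
  · intro hv
    rcases Finset.mem_insert.1 hv with rfl | hv
    · rw [succ_mem_faceSupport]; simp
    · obtain ⟨b, rfl⟩ := exists_fin_of_mem_Icc (faceSupport_subset _ hv)
      rw [succ_mem_faceSupport] at hv ⊢
      rw [Finsupp.add_apply]
      omega

lemma IsDownClosed.deletion {Δ : Set (Finset ℕ)} (hΔ : IsDownClosed Δ) (v : ℕ) :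
    IsDownClosed {F | F ∈ Δ ∧ v ∉ F} :=
  fun _ hF _ hG => ⟨hΔ _ hF.1 _ hG, fun h => hF.2 (hG h)⟩

lemma IsDownClosed.star {Δ : Set (Finset ℕ)} (hΔ : IsDownClosed Δ) (v : ℕ) :
    IsDownClosed {F | insert v F ∈ Δ} :=
  fun _ hF _ hG => hΔ _ hF _ (Finset.insert_subset_insert v hG)

lemma srIdeal_sup_span_X {Δ : Set (Finset ℕ)} (hΔ : IsDownClosed Δ) (a : Fin n) :
    srIdeal K n Δ ⊔ Ideal.span {X a} = srIdeal K n {F | F ∈ Δ ∧ (a : ℕ) + 1 ∉ F} := by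
  apply le_antisymm
  · refine sup_le (srIdeal_anti fun F hF => hF.1) ?_
    rw [Ideal.span_singleton_le_iff_mem, mem_srIdeal (hΔ.deletion _)]
    intro u hu
    rw [support_X, Finset.mem_singleton] at hu
    rintro ⟨-, h⟩
    exact h (by rw [succ_mem_faceSupport, hu]; simp)
  · refine Ideal.span_le.2 ?_
    rintro _ ⟨F, h1, h2, rfl⟩
    by_cases hF : F ∈ Δ
    · have ha : (a : ℕ) + 1 ∈ F := by
        by_contra h
        exact h2 ⟨hF, h⟩
      rw [← Finset.insert_erase ha, faceMonomial_insert (Finset.notMem_erase _ _)]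
      exact Ideal.mul_mem_right _ _ (Ideal.mem_sup_right (Ideal.mem_span_singleton_self _))
    · exact Ideal.mem_sup_left (faceMonomial_mem_srIdeal h1 hF)

lemma X_mul_mem_srIdeal {Δ : Set (Finset ℕ)} (hΔ : IsDownClosed Δ) (a : Fin n)
    {f : MvPolynomial (Fin n) K} :
    X a * f ∈ srIdeal K n Δ ↔ f ∈ srIdeal K n {F | insert ((a : ℕ) + 1) F ∈ Δ} := by
  rw [mem_srIdeal hΔ, mem_srIdeal (hΔ.star _), support_X_mul]
  simp only [Finset.mem_map, addLeftEmbedding_apply, forall_exists_index, and_imp,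
    forall_apply_eq_imp_iff₂, faceSupport_single_add, Set.mem_ofPred_eq]

lemma colonIdeal_srIdeal_X {Δ : Set (Finset ℕ)} (hΔ : IsDownClosed Δ) (a : Fin n) :
    colonIdeal (srIdeal K n Δ) (X a) = srIdeal K n {F | insert ((a : ℕ) + 1) F ∈ Δ} := by
  ext f
  rw [mem_colonIdeal, X_mul_mem_srIdeal hΔ]

/-- Adjoining a cone vertex preserves the strong Lefschetz property. -/
lemma IsLefschetz.cone {Δ : Set (Finset ℕ)} (hΔ : IsDownClosed Δ) {a : Fin n}
    (ha : ∀ F, insert ((a : ℕ) + 1) F ∈ Δ ↔ F ∈ Δ) {l : List (MvPolynomial (Fin n) K)}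
    {ω : MvPolynomial (Fin n) K} {s : ℕ}
    (h : IsLefschetz (srIdeal K n {F | F ∈ Δ ∧ (a : ℕ) + 1 ∉ F}) l ω s) :
    IsLefschetz (srIdeal K n Δ) (X a :: l) ω s := by
  rw [← srIdeal_sup_span_X hΔ] at h
  have hX : (X a : MvPolynomial (Fin n) K).IsHomogeneous 1 := isHomogeneous_X _ _
  have hl : ∀ x ∈ X a :: l, x.IsHomogeneous 1 := by
    intro x hx
    rcases List.mem_cons.1 hx with rfl | hx
    · exact hX
    · exact h.hom x hx
  refine ⟨hl, h.hom_elem, ?_, ?_, ?_, ?_, ?_⟩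
  · rw [numReg_cons (isHomIdeal_srIdeal _) hl, hilb_eq_partialSum_iff (isHomIdeal_srIdeal _) hX]
    refine ⟨fun f hf => ?_, h.numReg⟩
    rwa [X_mul_mem_srIdeal hΔ, show {F | insert ((a : ℕ) + 1) F ∈ Δ} = Δ from Set.ext ha] at hf
  · rw [sup_ofList_cons]; exact h.hilb_ne_zero
  · rw [sup_ofList_cons]; exact h.hilb_eq_zero
  · rw [sup_ofList_cons]; exact h.hilb_symm
  · rw [sup_ofList_cons]; exact h.lefschetz

lemma hilb_sup_succ_le {I T : Ideal (MvPolynomial (Fin n) K)} (hI : IsHomIdeal I)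
    (hT : IsHomIdeal T) {x : MvPolynomial (Fin n) K} (hx : x.IsHomogeneous 1) (k : ℕ) :
    hilb (I ⊔ T) (k + 1) ≤
      hilb (I ⊔ Ideal.span {x} ⊔ T) (k + 1) + hilb (colonIdeal I x ⊔ T) k := by
  rw [hilb_succ (hI.sup hT) hx, sup_right_comm]
  refine Nat.add_le_add_left (hilb_anti ?_ k) _
  refine sup_le (fun f hf => ?_) (fun f hf => ?_)
  · rw [mem_colonIdeal] at hf ⊢
    exact Ideal.mem_sup_left hf
  · rw [mem_colonIdeal]
    exact Ideal.mem_sup_right (T.mul_mem_left _ hf)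

lemma hilb_sup_zero {I T : Ideal (MvPolynomial (Fin n) K)} (hI : IsHomIdeal I)
    (hT : IsHomIdeal T) {x : MvPolynomial (Fin n) K} (hx : x.IsHomogeneous 1) :
    hilb (I ⊔ T) 0 = hilb (I ⊔ Ideal.span {x} ⊔ T) 0 := by
  rw [sup_right_comm, hilb_zero_sup_span (hI.sup hT) hx]

end LinkIdeals

section EdgeShift

open MvPolynomial

variable {K : Type*} [Field K] {n : ℕ}

lemma IsDownClosed.mem_contraction {Γ : Set (Finset ℕ)} (hΓ : IsDownClosed Γ) {i j : ℕ}
    {F : Finset ℕ} (hij : i ≠ j) :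
    F ∈ contraction Γ i j ↔ i ∉ F ∧ (F ∈ Γ ∨ j ∈ F ∧ insert i (F.erase j) ∈ Γ) := by
  constructor
  · rintro (⟨h1, h2⟩ | ⟨F', h1, h2, rfl⟩)
    · exact ⟨h2, Or.inl h1⟩
    · refine ⟨by grind, Or.inr ⟨by grind, hΓ _ h1 _ (by grind)⟩⟩
  · rintro ⟨h1, h2 | ⟨h2, h3⟩⟩
    · exact Or.inl ⟨h2, h1⟩
    · exact Or.inr ⟨_, h3, by grind, by grind⟩

lemma IsDownClosed.contraction {Γ : Set (Finset ℕ)} (hΓ : IsDownClosed Γ) {i j : ℕ}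
    (hij : i ≠ j) : IsDownClosed (contraction Γ i j) := by
  intro F hF G hG
  rw [hΓ.mem_contraction hij] at hF ⊢
  obtain ⟨h1, h2 | ⟨h2, h3⟩⟩ := hF
  · exact ⟨by grind, Or.inl (hΓ _ h2 _ hG)⟩
  · refine ⟨by grind, ?_⟩
    by_cases hj : j ∈ G
    · exact Or.inr ⟨hj, hΓ _ h3 _ (by grind)⟩
    · exact Or.inl (hΓ _ h3 _ (by grind))

lemma IsDownClosed.linkOf {Γ : Set (Finset ℕ)} (hΓ : IsDownClosed Γ) (F : Finset ℕ) :
    IsDownClosed (linkOf Γ F) :=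
  fun _ hG _ hH => ⟨hG.1.mono_left hH, hΓ _ hG.2 _ (Finset.union_subset_union_left hH)⟩

lemma LinkCondition.union_mem {Γ : Set (Finset ℕ)} {i j : ℕ} (h : LinkCondition Γ i j)
    {H : Finset ℕ} (hi : i ∉ H) (hj : j ∉ H) (h1 : insert i H ∈ Γ) (h2 : insert j H ∈ Γ) :
    H ∪ {i, j} ∈ Γ := by
  have : H ∈ linkOf Γ {i} ∩ linkOf Γ {j} := by
    refine ⟨⟨by simpa using hi, ?_⟩, ⟨by simpa using hj, ?_⟩⟩
    · rwa [Finset.union_singleton]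
    · rwa [Finset.union_singleton]
  rw [h] at this
  exact this.2

/-- The faces that form the star of the pair `{i, j}`. -/
def edgeStar (Γ : Set (Finset ℕ)) (i j : ℕ) : Set (Finset ℕ) := {F | F ∪ {i, j} ∈ Γ}

/-- The complex obtained from the contraction by gluing a cone, with apex `i`, over the star
of `{i, j}`. -/
def edgeShift (Γ : Set (Finset ℕ)) (i j : ℕ) : Set (Finset ℕ) :=
  {F | (i ∉ F ∧ F ∈ contraction Γ i j) ∨ (i ∈ F ∧ F ∪ {i, j} ∈ Γ)}

lemma IsDownClosed.edgeStar {Γ : Set (Finset ℕ)} (hΓ : IsDownClosed Γ) (i j : ℕ) :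
    IsDownClosed (edgeStar Γ i j) :=
  fun _ hG _ hH => hΓ _ hG _ (Finset.union_subset_union_left hH)

lemma IsDownClosed.edgeShift {Γ : Set (Finset ℕ)} (hΓ : IsDownClosed Γ) {i j : ℕ}
    (hij : i ≠ j) : IsDownClosed (edgeShift Γ i j) := by
  rintro F (⟨h1, h2⟩ | ⟨h1, h2⟩) G hG
  · exact Or.inl ⟨fun h => h1 (hG h), hΓ.contraction hij F h2 G hG⟩
  · by_cases hi : i ∈ G
    · exact Or.inr ⟨hi, hΓ _ h2 _ (Finset.union_subset_union_left hG)⟩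
    · exact Or.inl ⟨hi, Or.inl ⟨hΓ _ h2 _ (hG.trans Finset.subset_union_left), hi⟩⟩

lemma edgeShift_deletion {Γ : Set (Finset ℕ)} (hΓ : IsDownClosed Γ) {i j : ℕ} (hij : i ≠ j) :
    {F | F ∈ edgeShift Γ i j ∧ i ∉ F} = contraction Γ i j := by
  ext F
  constructor
  · rintro ⟨h1 | h1, h2⟩
    · exact h1.2
    · exact absurd h1.1 h2
  · intro h
    have := ((hΓ.mem_contraction hij).1 h).1
    exact ⟨Or.inl ⟨this, h⟩, this⟩

lemma edgeShift_star {Γ : Set (Finset ℕ)} {i j : ℕ} :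
    {F | insert i F ∈ edgeShift Γ i j} = edgeStar Γ i j := by
  ext F
  have : insert i F ∪ {i, j} = F ∪ {i, j} := by grind
  simp only [edgeShift, edgeStar, Set.mem_ofPred_eq, this, Finset.mem_insert, true_or, not_true,
    false_and, true_and, false_or]

lemma IsLefschetz.edgeStar {Γ : Set (Finset ℕ)} (hΓ : IsDownClosed Γ) {a b : Fin n} (hab : a ≠ b)
    {l : List (MvPolynomial (Fin n) K)} {ω : MvPolynomial (Fin n) K} {s : ℕ}
    (h : IsLefschetz (srIdeal K n (linkOf Γ {(a : ℕ) + 1, (b : ℕ) + 1})) l ω s) :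
    IsLefschetz (srIdeal K n (edgeStar Γ ((a : ℕ) + 1) ((b : ℕ) + 1))) (X a :: X b :: l) ω s := by
  have hab' : (a : ℕ) + 1 ≠ (b : ℕ) + 1 := fun h => hab (Fin.ext (by omega))
  have hJ := hΓ.edgeStar ((a : ℕ) + 1) ((b : ℕ) + 1)
  refine IsLefschetz.cone hJ (fun F => ?_) (IsLefschetz.cone (hJ.deletion _) (fun F => ?_) ?_)
  · have : insert ((a : ℕ) + 1) F ∪ {(a : ℕ) + 1, (b : ℕ) + 1} =
      F ∪ {(a : ℕ) + 1, (b : ℕ) + 1} := by grind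
    simp only [_root_.edgeStar, Set.mem_ofPred_eq, this]
  · have : insert ((b : ℕ) + 1) F ∪ {(a : ℕ) + 1, (b : ℕ) + 1} =
      F ∪ {(a : ℕ) + 1, (b : ℕ) + 1} := by grind
    simp only [_root_.edgeStar, Set.mem_ofPred_eq, this, Finset.mem_insert, hab', false_or]
  · convert h using 2
    ext F
    simp only [_root_.edgeStar, Set.mem_ofPred_eq, linkOf]
    rw [Finset.disjoint_insert_right, Finset.disjoint_singleton_right]
    tauto

lemma insert_erase_insert_erase {F : Finset ℕ} {i j : ℕ} (hi : i ∈ F) (hj : j ∉ F) :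
    insert i ((insert j (F.erase i)).erase j) = F := by
  rw [Finset.erase_insert fun h => hj (Finset.mem_of_mem_erase h), Finset.insert_erase hi]

lemma insert_erase_subset {F V : Finset ℕ} {i j : ℕ} (hF : F ⊆ V) (hi : i ∈ V) :
    insert i (F.erase j) ⊆ V :=
  Finset.insert_subset hi ((Finset.erase_subset _ _).trans hF)

open PowerSeries in
lemma hilb_srIdeal_edgeShift {Γ : Set (Finset ℕ)} (hΓ : IsDownClosed Γ) {i j : ℕ} (hij : i ≠ j)
    (hi : i ∈ Finset.Icc 1 n) (hj : j ∈ Finset.Icc 1 n) (hlc : LinkCondition Γ i j) (k : ℕ) :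
    hilb (srIdeal K n Γ) k = hilb (srIdeal K n (edgeShift Γ i j)) k := by
  classical
  have h1 : ∀ G ∈ edgeShift Γ i j, G ∉ Γ →
      i ∉ G ∧ j ∈ G ∧ insert i (G.erase j) ∈ Γ ∧ insert i (G.erase j) ∉ edgeShift Γ i j := by
    rintro G (⟨h1, h2⟩ | ⟨h1, h2⟩) h3
    · rw [hΓ.mem_contraction hij] at h2
      obtain ⟨-, h2 | ⟨h2, h4⟩⟩ := h2
      · exact absurd h2 h3
      · refine ⟨h1, h2, h4, ?_⟩
        rintro (⟨h5, -⟩ | ⟨-, h5⟩)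
        · exact h5 (Finset.mem_insert_self _ _)
        · exact h3 (hΓ _ h5 _ (by grind))
    · exact absurd (hΓ _ h2 _ Finset.subset_union_left) h3
  have h2 : ∀ F ∈ Γ, F ∉ edgeShift Γ i j →
      i ∈ F ∧ j ∉ F ∧ insert j (F.erase i) ∈ edgeShift Γ i j ∧ insert j (F.erase i) ∉ Γ := by
    intro F hF h
    have hiF : i ∈ F := by
      by_contra hiF
      exact h (Or.inl ⟨hiF, Or.inl ⟨hF, hiF⟩⟩)
    have hjF : j ∉ F := by
      intro hjF
      refine h (Or.inr ⟨hiF, ?_⟩)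
      have : F ∪ {i, j} = F := by grind
      rwa [this]
    refine ⟨hiF, hjF, Or.inl ⟨by grind, ?_⟩, fun h3 => ?_⟩
    · rw [hΓ.mem_contraction hij]
      refine ⟨by grind, Or.inr ⟨by grind, ?_⟩⟩
      rwa [insert_erase_insert_erase hiF hjF]
    · refine h (Or.inr ⟨hiF, ?_⟩)
      have := hlc.union_mem (H := F.erase i) (by grind) (by grind)
        (by rwa [Finset.insert_erase hiF]) h3
      have h4 : F ∪ {i, j} = F.erase i ∪ {i, j} := by grind
      rwa [h4]
  have h3 : (hilb (srIdeal K n Γ) k : ℤ) = hilb (srIdeal K n (edgeShift Γ i j)) k := by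
    rw [hilb_srIdeal hΓ, hilb_srIdeal (hΓ.edgeShift hij)]
    refine Finset.sum_nbij'
      (fun F => if F ∈ edgeShift Γ i j then F else insert j (F.erase i))
      (fun G => if G ∈ Γ then G else insert i (G.erase j)) ?_ ?_ ?_ ?_ ?_
    · intro F hF
      rw [mem_faceFinset] at hF ⊢
      split_ifs with h
      · exact ⟨hF.1, h⟩
      · exact ⟨insert_erase_subset hF.1 hj, (h2 F hF.2 h).2.2.1⟩
    · intro G hG
      rw [mem_faceFinset] at hG ⊢
      split_ifs with h
      · exact ⟨hG.1, h⟩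
      · exact ⟨insert_erase_subset hG.1 hi, (h1 G hG.2 h).2.2.1⟩
    · intro F hF
      rw [mem_faceFinset] at hF
      by_cases h : F ∈ edgeShift Γ i j
      · rw [if_pos h, if_pos hF.2]
      · obtain ⟨h4, h5, h6, h7⟩ := h2 F hF.2 h
        rw [if_neg h, if_neg h7]
        exact insert_erase_insert_erase h4 h5
    · intro G hG
      rw [mem_faceFinset] at hG
      by_cases h : G ∈ Γ
      · rw [if_pos h, if_pos hG.2]
      · obtain ⟨h4, h5, h6, h7⟩ := h1 G hG.2 h
        rw [if_neg h, if_neg h7]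
        exact insert_erase_insert_erase h5 h4
    · intro F hF
      rw [mem_faceFinset] at hF
      split_ifs with h
      · rfl
      · obtain ⟨h4, h5, h6, h7⟩ := h2 F hF.2 h
        rw [Finset.card_insert_of_notMem fun h => h5 (Finset.mem_of_mem_erase h), Finset.card_erase_add_one h4]
  exact_mod_cast h3

end EdgeShift

section Degeneration

open MvPolynomial

variable {K : Type*} [Field K] {n : ℕ}

lemma hilb_le_hilb_comap {ψ : MvPolynomial (Fin n) K →ₐ[K] MvPolynomial (Fin n) K}
    (hψ : Function.Injective ψ) (hhom : ∀ f k, f.IsHomogeneous k → (ψ f).IsHomogeneous k)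
    (I : Ideal (MvPolynomial (Fin n) K)) (k : ℕ) : hilb I k ≤ hilb (I.comap ψ) k := by
  have h1 := hilb_add_finrank_degPart I k
  have h2 := hilb_add_finrank_degPart (I.comap ψ) k
  have h3 : Module.finrank K (degPart (I.comap ψ) k) ≤ Module.finrank K (degPart I k) := by
    have hmem : ∀ f ∈ degPart (I.comap ψ) k, ψ.toLinearMap f ∈ degPart I k := fun f hf =>
      mem_degPart.2 ⟨(mem_degPart.1 hf).1, hhom f k (mem_degPart.1 hf).2⟩
    refine LinearMap.finrank_le_finrank_of_injective (f := ψ.toLinearMap.restrict hmem) ?_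
    intro x y hxy
    exact Subtype.ext (hψ (congrArg Subtype.val hxy))
  omega

/-- The linear change of coordinates `x_a ↦ t x_a`, `x_b ↦ x_a + x_b`. -/
noncomputable def edgeMap (a b : Fin n) (t : K) :
    MvPolynomial (Fin n) K →ₐ[K] MvPolynomial (Fin n) K :=
  aeval fun c => if c = a then C t * X a else if c = b then X a + X b else X c

lemma edgeMap_X_left (a b : Fin n) (t : K) : edgeMap a b t (X a) = C t * X a := by
  simp [edgeMap]

lemma edgeMap_X_right {a b : Fin n} (hab : a ≠ b) (t : K) :
    edgeMap a b t (X b) = X a + X b := by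
  simp [edgeMap, hab.symm]

lemma edgeMap_X_of_ne {a b c : Fin n} (ha : c ≠ a) (hb : c ≠ b) (t : K) :
    edgeMap a b t (X c) = X c := by
  simp [edgeMap, ha, hb]

lemma edgeMap_injective {a b : Fin n} (hab : a ≠ b) {t : K} (ht : t ≠ 0) :
    Function.Injective (edgeMap a b t) := by
  let χ : MvPolynomial (Fin n) K →ₐ[K] MvPolynomial (Fin n) K :=
    aeval fun c => if c = a then C t⁻¹ * X a else if c = b then X b - C t⁻¹ * X a else X c
  have h : χ.comp (edgeMap a b t) = AlgHom.id K _ := by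
    ext1 c
    rw [AlgHom.comp_apply, AlgHom.id_apply]
    by_cases ha : c = a
    · subst ha
      rw [edgeMap_X_left, map_mul, algHom_C]
      simp [χ, algebraMap_eq, ← mul_assoc, ← C_mul, ht]
    by_cases hb : c = b
    · subst hb
      rw [edgeMap_X_right hab]
      simp [χ, ha]
    · rw [edgeMap_X_of_ne ha hb]
      simp [χ, ha, hb]
  exact Function.LeftInverse.injective (g := χ) fun f => DFunLike.congr_fun h f

lemma edgeMap_isHomogeneous (a b : Fin n) (t : K) (f : MvPolynomial (Fin n) K) (k : ℕ)
    (hf : f.IsHomogeneous k) : (edgeMap a b t f).IsHomogeneous k := by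
  have := hf.aeval (n := 1)
    (fun c => if c = a then C t * X a else if c = b then X a + X b else X c) (fun c => by
      split_ifs
      · exact (isHomogeneous_X _ _).C_mul _
      · exact (isHomogeneous_X _ _).add (isHomogeneous_X _ _)
      · exact isHomogeneous_X _ _)
  rwa [one_mul] at this

lemma edgeMap_faceMonomial {a b : Fin n} {F : Finset ℕ} (ha : (a : ℕ) + 1 ∉ F)
    (hb : (b : ℕ) + 1 ∉ F) (t : K) : edgeMap a b t (faceMonomial K n F) = faceMonomial K n F := by
  rw [faceMonomial, map_prod]
  refine Finset.prod_congr rfl fun c hc => edgeMap_X_of_ne ?_ ?_ t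
  · rintro rfl
    exact ha (Finset.mem_filter.1 hc).2
  · rintro rfl
    exact hb (Finset.mem_filter.1 hc).2

open Classical in
/-- A one-parameter family through the squarefree monomial of a nonface of `edgeShift`. -/
noncomputable def edgeFamily (K : Type*) [Field K] (Γ : Set (Finset ℕ)) (a b : Fin n)
    (F : Finset ℕ) : Polynomial (MvPolynomial (Fin n) K) :=
  if (a : ℕ) + 1 ∈ F then
    Polynomial.C (faceMonomial K n (F.erase ((a : ℕ) + 1))) *
      (Polynomial.C (X a) + Polynomial.X * Polynomial.C
        (if insert ((a : ℕ) + 1) (F \ {(a : ℕ) + 1, (b : ℕ) + 1}) ∈ Γ then - X b else 0))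
  else Polynomial.C (faceMonomial K n F)

lemma faceMonomial_isHomogeneous (F : Finset ℕ) :
    ∃ e, (faceMonomial K n F).IsHomogeneous e := by
  rw [faceMonomial_eq_monomial]
  exact ⟨_, isHomogeneous_monomial _ rfl⟩

lemma exists_isHomFamily_edgeFamily (Γ : Set (Finset ℕ)) (a b : Fin n) (F : Finset ℕ) :
    ∃ e, IsHomFamily e (edgeFamily K Γ a b F) := by
  rw [edgeFamily]
  split_ifs
  · obtain ⟨e, he⟩ := faceMonomial_isHomogeneous (K := K) (n := n) (F.erase ((a : ℕ) + 1))
    exact ⟨_, (IsHomFamily.const he).mul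
      (IsHomFamily.pencil (isHomogeneous_X _ a) (isHomogeneous_X _ b).neg)⟩
  · obtain ⟨e, he⟩ := faceMonomial_isHomogeneous (K := K) (n := n) (F.erase ((a : ℕ) + 1))
    exact ⟨_, (IsHomFamily.const he).mul
      (IsHomFamily.pencil (isHomogeneous_X _ a) (isHomogeneous_zero _ _ _))⟩
  · obtain ⟨e, he⟩ := faceMonomial_isHomogeneous (K := K) (n := n) F
    exact ⟨_, IsHomFamily.const he⟩

lemma edgeFamily_eval_zero (Γ : Set (Finset ℕ)) (a b : Fin n) (F : Finset ℕ) :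
    (edgeFamily K Γ a b F).eval 0 = faceMonomial K n F := by
  rw [edgeFamily]
  split_ifs with h h'
  all_goals
    simp only [Polynomial.eval_mul, Polynomial.eval_add, Polynomial.eval_C, Polynomial.eval_X,
      zero_mul, add_zero]
  all_goals
    rw [mul_comm, ← faceMonomial_insert (Finset.notMem_erase _ _), Finset.insert_erase h]

lemma edgeMap_edgeFamily_mem {Γ : Set (Finset ℕ)} (hΓ : IsDownClosed Γ) {a b : Fin n}
    (hab : a ≠ b) (hlc : LinkCondition Γ ((a : ℕ) + 1) ((b : ℕ) + 1)) (t : K) {F : Finset ℕ}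
    (hF : F ⊆ Finset.Icc 1 n) (h : F ∉ edgeShift Γ ((a : ℕ) + 1) ((b : ℕ) + 1)) :
    edgeMap a b t ((edgeFamily K Γ a b F).eval (C t)) ∈ srIdeal K n Γ := by
  have hab' : (a : ℕ) + 1 ≠ (b : ℕ) + 1 := fun h => hab (Fin.ext (by omega))
  have hi : (a : ℕ) + 1 ∈ Finset.Icc 1 n := by
    have := a.isLt
    rw [Finset.mem_Icc]; omega
  have hj : (b : ℕ) + 1 ∈ Finset.Icc 1 n := by
    have := b.isLt
    rw [Finset.mem_Icc]; omega
  rw [edgeFamily]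
  by_cases hiF : (a : ℕ) + 1 ∈ F
  · rw [if_pos hiF]
    have hU : F ∪ {(a : ℕ) + 1, (b : ℕ) + 1} ∉ Γ := fun hU => h (Or.inr ⟨hiF, hU⟩)
    set H := F \ {(a : ℕ) + 1, (b : ℕ) + 1} with hH
    have hHi : (a : ℕ) + 1 ∉ H := by simp [hH]
    have hHj : (b : ℕ) + 1 ∉ H := by simp [hH]
    have hHF : H ⊆ Finset.Icc 1 n := Finset.sdiff_subset.trans hF
    have hHU : H ∪ {(a : ℕ) + 1, (b : ℕ) + 1} = F ∪ {(a : ℕ) + 1, (b : ℕ) + 1} := by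
      rw [hH, Finset.sdiff_union_self_eq_union]
    have hdvd : faceMonomial K n H ∣ edgeMap a b t (faceMonomial K n (F.erase ((a : ℕ) + 1))) := by
      by_cases hjF : (b : ℕ) + 1 ∈ F
      · have : F.erase ((a : ℕ) + 1) = insert ((b : ℕ) + 1) H := by
          rw [hH]; ext v; simp; grind
        rw [this, faceMonomial_insert hHj, map_mul, edgeMap_faceMonomial hHi hHj]
        exact dvd_mul_left _ _
      · have : F.erase ((a : ℕ) + 1) = H := by
          rw [hH]; ext v; simp; grind
        rw [this, edgeMap_faceMonomial hHi hHj]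
    simp only [Polynomial.eval_mul, Polynomial.eval_add, Polynomial.eval_C, Polynomial.eval_X,
      map_mul, map_add, edgeMap_X_left, algHom_C, algebraMap_eq]
    obtain ⟨g, hg⟩ := hdvd
    rw [hg, mul_right_comm]
    refine Ideal.mul_mem_right _ _ ?_
    split_ifs with hc
    · have : insert ((b : ℕ) + 1) H ∉ Γ := fun h' =>
        hU (hHU ▸ hlc.union_mem hHi hHj hc h')
      have hm := faceMonomial_mem_srIdeal (K := K) (Finset.insert_subset hj hHF) this
      rw [faceMonomial_insert hHj] at hm
      rw [map_neg, edgeMap_X_right hab, show faceMonomial K n H *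
        (C t * X a + C t * -(X a + X b)) = -C t * (X b * faceMonomial K n H) by ring]
      exact Ideal.mul_mem_left _ _ hm
    · have hm := faceMonomial_mem_srIdeal (K := K) (Finset.insert_subset hi hHF) hc
      rw [faceMonomial_insert hHi] at hm
      rw [map_zero, show faceMonomial K n H *
        (C t * X a + C t * 0) = C t * (X a * faceMonomial K n H) by ring]
      exact Ideal.mul_mem_left _ _ hm
  · rw [if_neg hiF, Polynomial.eval_C]
    have hC : F ∉ contraction Γ ((a : ℕ) + 1) ((b : ℕ) + 1) := fun hC => h (Or.inl ⟨hiF, hC⟩)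
    rw [hΓ.mem_contraction hab'] at hC
    have hFΓ : F ∉ Γ := fun hFΓ => hC ⟨hiF, Or.inl hFΓ⟩
    have hm := faceMonomial_mem_srIdeal (K := K) hF hFΓ
    by_cases hjF : (b : ℕ) + 1 ∈ F
    · have h2 : insert ((a : ℕ) + 1) (F.erase ((b : ℕ) + 1)) ∉ Γ := fun h2 =>
        hC ⟨hiF, Or.inr ⟨hjF, h2⟩⟩
      have hi' : (a : ℕ) + 1 ∉ F.erase ((b : ℕ) + 1) := fun h => hiF (Finset.mem_of_mem_erase h)
      have hm' := faceMonomial_mem_srIdeal (K := K) (insert_erase_subset hF hi) h2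
      rw [faceMonomial_insert hi'] at hm'
      rw [← Finset.insert_erase hjF, faceMonomial_insert (Finset.notMem_erase _ _)] at hm ⊢
      rw [map_mul, edgeMap_faceMonomial hi' (Finset.notMem_erase _ _), edgeMap_X_right hab, add_mul]
      exact Ideal.add_mem _ hm' hm
    · rwa [edgeMap_faceMonomial hiF hjF]

/-- The contraction complex with the star of the edge glued on is a degeneration of `Γ`. -/
lemma exists_finite_hilb_edgeMap_le [Infinite K] {Γ : Set (Finset ℕ)} (hΓ : IsDownClosed Γ)
    {a b : Fin n} (hab : a ≠ b) (hlc : LinkCondition Γ ((a : ℕ) + 1) ((b : ℕ) + 1))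
    {T : Ideal (MvPolynomial (Fin n) K)} (hT : IsHomIdeal T) (k : ℕ) :
    ∃ B : Set K, B.Finite ∧ ∀ t ∉ B, hilb (srIdeal K n Γ ⊔ T.map (edgeMap a b t)) k ≤
      hilb (srIdeal K n (edgeShift Γ ((a : ℕ) + 1) ((b : ℕ) + 1)) ⊔ T) k := by
  set Δ := edgeShift Γ ((a : ℕ) + 1) ((b : ℕ) + 1) with hΔ
  set 𝒬 : Set (Polynomial (MvPolynomial (Fin n) K)) :=
    edgeFamily K Γ a b '' {F | F ⊆ Finset.Icc 1 n ∧ F ∉ Δ} with h𝒬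
  have h0 : familyIdeal 𝒬 0 = srIdeal K n Δ := by
    rw [familyIdeal_zero, srIdeal, h𝒬, Set.image_image]
    congr 1
    ext f
    simp only [edgeFamily_eval_zero, Set.mem_image, Set.mem_ofPred_eq, and_assoc, eq_comm]
  obtain ⟨B, hB, hBt⟩ := exists_finite_hilb_sup_le hT (𝒬 := 𝒬) (by
    rintro _ ⟨F, -, rfl⟩
    exact exists_isHomFamily_edgeFamily Γ a b F) k
  refine ⟨insert 0 B, hB.insert 0, fun t ht => ?_⟩
  rw [Set.mem_insert_iff, not_or] at ht
  refine (hilb_le_hilb_comap (edgeMap_injective hab ht.1) (edgeMap_isHomogeneous a b t) _ k).trans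
    ((hilb_anti ?_ k).trans ((hBt t ht.2).trans ?_))
  · refine sup_le (fun f hf => Ideal.mem_sup_right (Ideal.mem_map_of_mem _ hf)) ?_
    refine Ideal.span_le.2 ?_
    rintro _ ⟨_, ⟨F, hF, rfl⟩, rfl⟩
    exact Ideal.mem_sup_left (edgeMap_edgeFamily_mem hΓ hab hlc t hF.1 hF.2)
  · rw [h0, sup_comm]

end Degeneration

section EdgeContraction

open MvPolynomial

variable {K : Type*} [Field K] {n : ℕ}

/-- Shift a sequence by one place. -/
def shiftSeq (f : ℕ → ℕ) : ℕ → ℕ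
  | 0 => 0
  | k + 1 => f k

lemma partialSum_add (f g : ℕ → ℕ) : partialSum (f + g) = partialSum f + partialSum g := by
  ext k
  simp [partialSum, Finset.sum_add_distrib]

lemma partialSum_shiftSeq (f : ℕ → ℕ) : partialSum (shiftSeq f) = shiftSeq (partialSum f) := by
  ext k
  induction k with
  | zero => rw [partialSum_zero]; rfl
  | succ k ih =>
    rw [partialSum_succ, ih]
    cases k with
    | zero => exact (partialSum_zero f).symm
    | succ k => exact (partialSum_succ f k).symm

lemma iterate_partialSum_add_shiftSeq (m : ℕ) (f g : ℕ → ℕ) :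
    partialSum^[m] (f + shiftSeq g) = partialSum^[m] f + shiftSeq (partialSum^[m] g) := by
  induction m with
  | zero => rfl
  | succ m ih =>
    simp only [Function.iterate_succ_apply', ih, partialSum_add, partialSum_shiftSeq]

lemma hilb_edgeShift {Γ : Set (Finset ℕ)} (hΓ : IsDownClosed Γ) {a b : Fin n} (hab : a ≠ b) :
    hilb (srIdeal K n (edgeShift Γ ((a : ℕ) + 1) ((b : ℕ) + 1))) =
      hilb (srIdeal K n (contraction Γ ((a : ℕ) + 1) ((b : ℕ) + 1))) +
        shiftSeq (hilb (srIdeal K n (edgeStar Γ ((a : ℕ) + 1) ((b : ℕ) + 1)))) := by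
  have hab' : (a : ℕ) + 1 ≠ (b : ℕ) + 1 := fun h => hab (Fin.ext (by omega))
  have hΔ := hΓ.edgeShift hab'
  have hX : (X a : MvPolynomial (Fin n) K).IsHomogeneous 1 := isHomogeneous_X _ _
  have h1 := srIdeal_sup_span_X (K := K) hΔ a
  rw [edgeShift_deletion hΓ hab'] at h1
  have h2 := colonIdeal_srIdeal_X (K := K) hΔ a
  rw [edgeShift_star] at h2
  rw [← h1, ← h2]
  ext (_ | k)
  · exact (hilb_zero_sup_span (isHomIdeal_srIdeal _) hX).symm
  · exact hilb_succ (isHomIdeal_srIdeal _) hX k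

lemma hilb_edgeShift_sup_le {Γ : Set (Finset ℕ)} (hΓ : IsDownClosed Γ) {a b : Fin n} (hab : a ≠ b)
    {T : Ideal (MvPolynomial (Fin n) K)} (hT : IsHomIdeal T) :
    hilb (srIdeal K n (edgeShift Γ ((a : ℕ) + 1) ((b : ℕ) + 1)) ⊔ T) ≤
      hilb (srIdeal K n (contraction Γ ((a : ℕ) + 1) ((b : ℕ) + 1)) ⊔ T) +
        shiftSeq (hilb (srIdeal K n (edgeStar Γ ((a : ℕ) + 1) ((b : ℕ) + 1)) ⊔ T)) := by
  have hab' : (a : ℕ) + 1 ≠ (b : ℕ) + 1 := fun h => hab (Fin.ext (by omega))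
  have hΔ := hΓ.edgeShift hab'
  have hX : (X a : MvPolynomial (Fin n) K).IsHomogeneous 1 := isHomogeneous_X _ _
  have h1 := srIdeal_sup_span_X (K := K) hΔ a
  rw [edgeShift_deletion hΓ hab'] at h1
  have h2 := colonIdeal_srIdeal_X (K := K) hΔ a
  rw [edgeShift_star] at h2
  rw [← h1, ← h2]
  rintro (_ | k)
  · exact (hilb_sup_zero (isHomIdeal_srIdeal _) hT hX).le
  · exact hilb_sup_succ_le (isHomIdeal_srIdeal _) hT hX k

lemma map_ofList_algHom {σ τ : Type*} (φ : MvPolynomial σ K →ₐ[K] MvPolynomial τ K)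
    (l : List (MvPolynomial σ K)) : (Ideal.ofList l).map φ = Ideal.ofList (l.map φ) := by
  rw [Ideal.ofList, Ideal.map_span, Ideal.ofList]
  congr 1
  ext x
  simp

/-- If the contraction and the star of the edge are Lefschetz with respect to the same linear
forms, then `Γ` is Lefschetz. -/
lemma exists_isLefschetz_of_contraction [Infinite K] {Γ : Set (Finset ℕ)} (hΓ : IsDownClosed Γ)
    {a b : Fin n} (hab : a ≠ b) (hlc : LinkCondition Γ ((a : ℕ) + 1) ((b : ℕ) + 1))
    {l : List (MvPolynomial (Fin n) K)} {ω : MvPolynomial (Fin n) K} {e : ℕ}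
    (hC : IsLefschetz (srIdeal K n (contraction Γ ((a : ℕ) + 1) ((b : ℕ) + 1))) l ω (e + 2))
    (hJ : IsLefschetz (srIdeal K n (edgeStar Γ ((a : ℕ) + 1) ((b : ℕ) + 1))) l ω e) :
    ∃ l' ω', l'.length = l.length ∧ IsLefschetz (srIdeal K n Γ) l' ω' (e + 2) := by
  have hab' : (a : ℕ) + 1 ≠ (b : ℕ) + 1 := fun h => hab (Fin.ext (by omega))
  have ha : (a : ℕ) + 1 ∈ Finset.Icc 1 n := by
    have := a.isLt
    rw [Finset.mem_Icc]; omega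
  have hb : (b : ℕ) + 1 ∈ Finset.Icc 1 n := by
    have := b.isLt
    rw [Finset.mem_Icc]; omega
  set IC := srIdeal K n (contraction Γ ((a : ℕ) + 1) ((b : ℕ) + 1)) with hIC
  set IJ := srIdeal K n (edgeStar Γ ((a : ℕ) + 1) ((b : ℕ) + 1)) with hIJ
  have hl := isHomIdeal_ofList hC.hom
  have hω : ∀ k, IsHomIdeal (Ideal.ofList l ⊔ Ideal.span {ω ^ k}) := fun k =>
    hl.sup (isHomIdeal_span_singleton (hC.hom_elem.pow k))
  choose B hB hBt using fun k => exists_finite_hilb_edgeMap_le hΓ hab hlc hl k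
  choose B' hB' hBt' using fun k =>
    exists_finite_hilb_edgeMap_le hΓ hab hlc (hω (e + 2 - 2 * k)) (e + 2 - k)
  have hfin : ((⋃ k ∈ Finset.range (e + 4), B k) ∪ ⋃ k ∈ Finset.range (e + 4), B' k).Finite :=
    (Set.Finite.biUnion (Finset.finite_toSet _) fun k _ => hB k).union
      (Set.Finite.biUnion (Finset.finite_toSet _) fun k _ => hB' k)
  obtain ⟨t, ht⟩ := hfin.exists_notMem
  simp only [Set.mem_union, Set.mem_iUnion, not_or, not_exists, Finset.mem_range] at ht
  obtain ⟨ψ, hψ⟩ : ∃ ψ, ψ = edgeMap (K := K) a b t := ⟨_, rfl⟩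
  have hlψ : (Ideal.ofList l).map ψ = Ideal.ofList (l.map ψ) := map_ofList_algHom ψ l
  have hhom : ∀ x ∈ l.map ψ, x.IsHomogeneous 1 := by
    intro x hx
    obtain ⟨y, hy, rfl⟩ := List.mem_map.1 hx
    rw [hψ]
    exact edgeMap_isHomogeneous a b t y 1 (hC.hom y hy)
  set G := hilb (srIdeal K n Γ ⊔ Ideal.ofList (l.map ψ)) with hG
  set H := hilb (IC ⊔ Ideal.ofList l) + shiftSeq (hilb (IJ ⊔ Ideal.ofList l)) with hH
  have hGH' : ∀ k < e + 4, G k ≤ H k := by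
    intro k hk
    have := hBt k t (ht.1 k hk)
    rw [← hψ, hlψ] at this
    exact this.trans (hilb_edgeShift_sup_le hΓ hab hl k)
  have hH0 : ∀ k, e + 2 < k → H k = 0 := by
    rintro (_ | k) hk
    · omega
    · change hilb (IC ⊔ Ideal.ofList l) (k + 1) + hilb (IJ ⊔ Ideal.ofList l) k = 0
      rw [hC.hilb_eq_zero _ hk, hJ.hilb_eq_zero k (by omega)]
  have hG0 : ∀ k, e + 2 < k → G k = 0 := by
    intro k hk
    refine hilb_eq_zero_of_le (k := e + 3) ?_ hk
    exact Nat.le_zero.1 ((hGH' (e + 3) (by omega)).trans (hH0 _ (by omega)).le)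
  have hGH : G ≤ H := by
    intro k
    by_cases hk : k < e + 4
    · exact hGH' k hk
    · rw [hG0 k (by omega)]; exact Nat.zero_le _
  have hΓH : hilb (srIdeal K n Γ) = partialSum^[l.length] H := by
    have h1 : hilb (srIdeal K n Γ) =
        hilb (srIdeal K n (edgeShift Γ ((a : ℕ) + 1) ((b : ℕ) + 1))) :=
      funext (hilb_srIdeal_edgeShift hΓ hab' ha hb hlc)
    have h2 : hilb IC = partialSum^[l.length] (hilb (IC ⊔ Ideal.ofList l)) := hC.numReg
    have h3 : hilb IJ = partialSum^[l.length] (hilb (IJ ⊔ Ideal.ofList l)) := hJ.numReg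
    rw [h1, hilb_edgeShift hΓ hab, ← hIC, ← hIJ, hH, iterate_partialSum_add_shiftSeq, ← h2, ← h3]
  have hlen : (l.map ψ).length = l.length := List.length_map _
  have hreg : partialSum^[l.length] H = partialSum^[l.length] G := by
    refine le_antisymm ?_ (partialSum_mono.iterate _ hGH)
    have := hilb_le_iterate_partialSum (isHomIdeal_srIdeal (K := K) (n := n) Γ) hhom
    rwa [hlen, hΓH] at this
  have hGeq : G = H := (partialSum_injective.iterate _ hreg).symm
  refine ⟨l.map ψ, ψ ω, hlen, hhom,
    hψ ▸ edgeMap_isHomogeneous a b t ω 1 hC.hom_elem, ?_, ?_, hG0, ?_,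
    ?_⟩
  · rw [NumReg, hlen, ← hG, hΓH, hreg]
  · rw [← hG, hGeq, hH]
    have := hC.hilb_ne_zero
    rw [Pi.add_apply]
    omega
  · rw [← hG, hGeq]
    rintro (_ | k) hk
    · change hilb (IC ⊔ Ideal.ofList l) 0 + 0 =
        hilb (IC ⊔ Ideal.ofList l) (e + 2) + hilb (IJ ⊔ Ideal.ofList l) (e + 1)
      rw [hJ.hilb_eq_zero (e + 1) (by omega), hC.hilb_symm 0 (by omega), Nat.sub_zero]
    · have h1 := hC.hilb_symm (k + 1) hk
      have h2 := hJ.hilb_symm k (by omega)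
      rw [show e + 2 - (k + 1) = e - k + 1 by omega] at h1 ⊢
      change hilb (IC ⊔ Ideal.ofList l) (k + 1) + hilb (IJ ⊔ Ideal.ofList l) k =
        hilb (IC ⊔ Ideal.ofList l) (e - k + 1) + hilb (IJ ⊔ Ideal.ofList l) (e - k)
      rw [h1, h2]
  · intro k hk
    have h1 := (hBt' k t (ht.2 k (by omega))).trans
      (hilb_edgeShift_sup_le hΓ hab (hω (e + 2 - 2 * k)) (e + 2 - k))
    rw [← hψ, Ideal.map_sup, hlψ, Ideal.map_span, Set.image_singleton, map_pow, ← sup_assoc] at h1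
    refine Nat.le_zero.1 (h1.trans ?_)
    rw [← hIC, ← hIJ, ← sup_assoc, ← sup_assoc, Pi.add_apply, hC.lefschetz k hk, zero_add]
    rcases k with _ | k
    · change hilb (IJ ⊔ Ideal.ofList l ⊔ _) (e + 1) ≤ 0
      exact (hilb_anti le_sup_left _).trans (hJ.hilb_eq_zero _ (by omega)).le
    · have h2 := hJ.lefschetz k (by omega)
      rw [show e + 2 - (k + 1) = e - k + 1 by omega, show e + 2 - 2 * (k + 1) = e - 2 * k by omega]
      exact h2.le

end EdgeContraction

/-- Proposition 3.1 / 4.5. Let `Γ` be a `(d-1)`-dimensional complex on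
`[n]` satisfying the Link condition w.r.t. `{i,j}`, with `dim C_Γ(ij) = d-1` and
`dim lk_Γ({i,j}) = d-3`. If `C_Γ(ij)` and `lk_Γ({i,j})` have the strong Lefschetz property
over an infinite field `K` (of arbitrary characteristic), then so does `Γ`. -/
theorem stmt7 (K : Type) [Field K] (hK : Infinite K)
    (n d i j : ℕ) (hi : 1 ≤ i) (hij : i < j) (hj : j ≤ n)
    (Γ : Set (Finset ℕ)) (hΓ : SimplicialComplexOn (Finset.Icc 1 n) Γ)
    (hdim : sdim Γ = (d : ℤ) - 1)
    (hlc : LinkCondition Γ i j)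
    (hcd : sdim (contraction Γ i j) = (d : ℤ) - 1)
    (hld : sdim (linkOf Γ {i, j}) = (d : ℤ) - 3)
    (h1 : ComplexSLP K n d (contraction Γ i j))
    (h2 : ComplexSLP K n (d - 2) (linkOf Γ {i, j})) :
    ComplexSLP K n d Γ := by
  have := hK
  obtain ⟨hsub, hvert, hΓ'⟩ := hΓ
  have hdown : IsDownClosed Γ := hΓ'
  obtain ⟨a, rfl⟩ := exists_fin_of_mem_Icc (n := n) (Finset.mem_Icc.2 ⟨hi, by omega⟩)
  obtain ⟨b, rfl⟩ := exists_fin_of_mem_Icc (n := n) (Finset.mem_Icc.2 ⟨by omega, hj⟩)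
  have hab : a ≠ b := by
    rintro rfl
    exact lt_irrefl _ hij
  have hia := hvert ((a : ℕ) + 1) (Finset.mem_Icc.2 ⟨hi, by omega⟩)
  have hempty : (∅ : Finset ℕ) ∈ Γ := hdown _ hia _ (Finset.empty_subset _)
  obtain ⟨hd, hd'⟩ := sdim_spec hsub ⟨_, hempty⟩ hdim
  have hCdown := hdown.contraction hij.ne
  have hCsub : ∀ F ∈ contraction Γ ((a : ℕ) + 1) ((b : ℕ) + 1), F ⊆ Finset.Icc 1 n := by
    rintro F (⟨hF, -⟩ | ⟨F, hF, -, rfl⟩)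
    · exact hsub F hF
    · exact Finset.union_subset ((Finset.erase_subset _ _).trans (hsub F hF))
        (Finset.singleton_subset_iff.2 (Finset.mem_Icc.2 ⟨by omega, hj⟩))
  obtain ⟨hCd, hCd'⟩ := sdim_spec hCsub
    ⟨∅, Or.inl ⟨hempty, Finset.notMem_empty _⟩⟩ hcd
  have hLdown := hdown.linkOf {(a : ℕ) + 1, (b : ℕ) + 1}
  have hLsub : ∀ F ∈ linkOf Γ {(a : ℕ) + 1, (b : ℕ) + 1}, F ⊆ Finset.Icc 1 n := fun F hF =>
    Finset.subset_union_left.trans (hsub _ hF.2)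
  have hLne : (linkOf Γ {(a : ℕ) + 1, (b : ℕ) + 1}).Nonempty := by
    by_contra h
    have h0 := h2.1
    rw [Set.not_nonempty_iff_eq_empty.1 h] at h0
    simp [hvec, fvec] at h0
  have hd2 : 2 ≤ d := by
    obtain ⟨F, hF⟩ := hLne
    have h3 : Finset.card {(a : ℕ) + 1, (b : ℕ) + 1} = 2 := Finset.card_pair hij.ne
    rw [← h3]
    exact (Finset.card_le_card Finset.subset_union_right).trans (hd _ hF.2)
  obtain ⟨e, rfl⟩ := Nat.exists_eq_add_of_le' hd2
  rw [Nat.add_sub_cancel] at h2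
  obtain ⟨hLd, hLd'⟩ := sdim_spec (d := e) hLsub hLne (by rw [hld]; push_cast; ring)
  obtain ⟨l₁, ω₁, hl₁, hC⟩ := h1.exists_isLefschetz hCdown hCsub hCd hCd'
  obtain ⟨l₂, ω₂, hl₂, hL⟩ := h2.exists_isLefschetz hLdown hLsub hLd hLd'
  obtain ⟨l, ω, hl, hC', hJ'⟩ := IsLefschetz.exists_common (isHomIdeal_srIdeal _)
    (isHomIdeal_srIdeal _) hC (hL.edgeStar hdown hab) hl₁ (by simp [hl₂])
  obtain ⟨l', ω', hl', h⟩ := exists_isLefschetz_of_contraction hdown hab hlc hC' hJ'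
  exact h.complexSLP hdown hsub hd hd' (hl'.trans hl)
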